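/- arXiv:1806.06252 — 2 statements merged into one kernel-verified Lean document; each statement's English description precedes it below -/
import Mathlib

section
/- There is an absolute constant δ₀ > 0 with the following property: for every δ̄ > 0 and every compact set K ⊆ ℝ² there is a constant C, depending only on K and δ̄, such that for every pair (u, v) ∈ S(δ̄): u and v are continuously differentiable on K, sup_K |u| ≤ C, sup_K |∇u| ≤ C, ‖∇u(x) − ∇u(y)‖ ≤ C‖x − y‖^{δ₀} for all x, y ∈ K, and the same three bounds hold with u replaced by v. -/
noncomputable section

open MeasureTheory Metric Set
open scoped RealInnerProductSpace

abbrev R2 : Type := EuclideanSpace ℝ (Fin 2)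

/-- `p` is a subgradient of `f` at `x`. -/
def SubgradAt (f : R2 → ℝ) (x p : R2) : Prop :=
  ∀ y : R2, f x + ⟪p, y - x⟫ ≤ f y

/-- `ψ` is a (canonically extended) potential of the optimal transport between `U₁` and `U₂`:
it is convex on `ℝ²`, all its subgradients lie in `closure U₂`, and its gradient map pushes
the Lebesgue measure restricted to `U₁` forward to the Lebesgue measure restricted to `U₂`. -/
def IsOTPotential (U₁ U₂ : Set R2) (ψ : R2 → ℝ) : Prop :=
  ConvexOn ℝ Set.univ ψ ∧
  (∀ x p : R2, SubgradAt ψ x p → p ∈ closure U₂) ∧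
  MeasureTheory.Measure.map (fun x => gradient ψ x) (MeasureTheory.volume.restrict U₁) =
    MeasureTheory.volume.restrict U₂

/-- `S` is a centred section of `w` at `x₀` of height `h`:
`S = {w < w x₀ + p · (· - x₀) + h}` for a slope `p` chosen so that
the centre of mass of `S` is `x₀`. -/
def IsCentredSection (w : R2 → ℝ) (x₀ : R2) (h : ℝ) (S : Set R2) : Prop :=
  ∃ p : R2, S = {x : R2 | w x < w x₀ + ⟪p, x - x₀⟫ + h} ∧
    (∫ x in S, (x - x₀) ∂(MeasureTheory.volume)) = 0

/-- Dilation of `S` about `x₀` by factor `t`. -/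
def dilate (x₀ : R2) (t : ℝ) (S : Set R2) : Set R2 :=
  (fun x => x₀ + t • (x - x₀)) '' S

/-- The (closed) ellipse centred at `0` with half-axis `A` in unit direction `e` and
half-axis `B` in the orthogonal unit direction `f`. -/
def ellipse (e f : R2) (A B : ℝ) : Set R2 :=
  {x : R2 | (⟪x, e⟫ / A) ^ 2 + (⟪x, f⟫ / B) ^ 2 ≤ 1}

/-- `w` is an Alexandrov solution of `det D² w = χ_Ω` in `ℝ²`: the Lebesgue measure of the
subdifferential image of any Borel set `E` equals the Lebesgue measure of `E ∩ Ω`. -/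
def AlexandrovSol (w : R2 → ℝ) (Ω : Set R2) : Prop :=
  ∀ E : Set R2, MeasurableSet E →
    MeasureTheory.volume (⋃ x ∈ E, {p : R2 | SubgradAt w x p}) =
      MeasureTheory.volume (E ∩ Ω)

/-- Membership of the pair `(u, v)` in the normalized family `S(δ̄)`, together with the
associated data: the domains `Ω₁, Ω₂`, and, for each height `h ∈ (0,1]`, the ellipse
`E_h = ellipse (e h) (f h) (L h) (l h)` centred at `0` (long half-axis `L h` in unit
direction `e h`, short half-axis `l h` in the orthogonal unit direction `f h`, area `hπ`,
so `L h * l h = h`), whose perpendicular ellipse is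
`E_h^⊥ = ellipse (f h) (e h) (L h) (l h)`.  The eccentricity is `η_u(h) = L h / l h`. -/
def InSFamily (δb : ℝ) (u v : R2 → ℝ) (Ω₁ Ω₂ : Set R2)
    (L l : ℝ → ℝ) (e f : ℝ → R2) : Prop :=
  ConvexOn ℝ Set.univ u ∧ ConvexOn ℝ Set.univ v ∧
  Convex ℝ Ω₁ ∧ Convex ℝ Ω₂ ∧
  (interior Ω₁).Nonempty ∧ (interior Ω₂).Nonempty ∧
  (0 : R2) ∈ frontier Ω₁ ∧ (0 : R2) ∈ frontier Ω₂ ∧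
  (fun x => gradient u x) '' Ω₁ = Ω₂ ∧ (fun y => gradient v y) '' Ω₂ = Ω₁ ∧
  AlexandrovSol u Ω₁ ∧ u 0 = 0 ∧ SubgradAt u 0 0 ∧
  AlexandrovSol v Ω₂ ∧ v 0 = 0 ∧ SubgradAt v 0 0 ∧
  (∀ y ∈ Ω₂, v y = ⨆ x : R2, (⟪x, y⟫ - u x)) ∧
  L 1 = 1 ∧ l 1 = 1 ∧
  (∀ h : ℝ, h ∈ Set.Ioc (0 : ℝ) 1 →
    ‖e h‖ = 1 ∧ ‖f h‖ = 1 ∧ ⟪e h, f h⟫ = 0 ∧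
    0 < l h ∧ l h ≤ L h ∧ L h * l h = h ∧
    (∃ S : Set R2, IsCentredSection u 0 h S ∧
      (∃ xh : R2, (fun z => xh + δb • z) '' ellipse (e h) (f h) (L h) (l h) ⊆ Ω₁ ∩ S) ∧
      S ⊆ (fun z => δb⁻¹ • z) '' ellipse (e h) (f h) (L h) (l h)) ∧
    (∃ S : Set R2, IsCentredSection v 0 h S ∧
      (∃ yh : R2, (fun z => yh + δb • z) '' ellipse (f h) (e h) (L h) (l h) ⊆ Ω₂ ∩ S) ∧
      S ⊆ (fun z => δb⁻¹ • z) '' ellipse (f h) (e h) (L h) (l h)))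

/-- `z ↦ t • x` cone over `Ω` with vertex `0` (closed): the tangent cone of `Ω` at `0`. -/
def tangentConeZero (Ω : Set R2) : Set R2 :=
  closure {y : R2 | ∃ t : ℝ, 0 ≤ t ∧ ∃ x ∈ Ω, y = t • x}

/-- The planar cross product (determinant) of two vectors. -/
def det2 (a b : R2) : ℝ := a 0 * b 1 - a 1 * b 0

/-- `r` is the unit direction of the right tangent ray of `∂Ω` at `0`:
it lies in the tangent cone of `Ω` at `0` and the whole tangent cone lies
(weakly) counterclockwise from it. -/
def IsRightTangent (Ω : Set R2) (r : R2) : Prop :=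
  ‖r‖ = 1 ∧ r ∈ tangentConeZero Ω ∧ ∀ x ∈ tangentConeZero Ω, 0 ≤ det2 r x

/-- `l` is the unit direction of the left tangent ray of `∂Ω` at `0`:
it lies in the tangent cone of `Ω` at `0` and the whole tangent cone lies
(weakly) clockwise from it. -/
def IsLeftTangent (Ω : Set R2) (l : R2) : Prop :=
  ‖l‖ = 1 ∧ l ∈ tangentConeZero Ω ∧ ∀ x ∈ tangentConeZero Ω, det2 l x ≤ 0

/-- The open cone of direction `e` and opening angle `θ`. -/
def cone2 (e : R2) (θ : ℝ) : Set R2 :=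
  {y : R2 | ∃ lam : ℝ, 0 < lam ∧ ∃ w : R2, ‖w‖ = 1 ∧
    InnerProductGeometry.angle w e < θ ∧ y = lam • w}

/-!
In the plane a convex function with `det D²f ≥ κ` on a triangle cannot be small along a whole edge
(Heinz). Applied to the symmetric sections `{y | f (m + y) + f (m - y) - 2 * f m ≤ 2 * h}` of an
Alexandrov solution `f` of `det D²f = χ_Ω`, centred at a point `m` of the closure of the convex
domain, it shows that halving such a section reduces the height by at most an absolute factor. Hence
these second differences are bounded below by a power of the distance with an absolute exponent `β`,
and, by Legendre duality, the subgradients of the dual potential are Hölder continuous with exponent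
`1 / (β - 1)`. A centred section of height one comparable to the unit disk makes the potential grow
linearly, which makes the constants locally uniform; the local gradient bound is again Heinz's
estimate, applied to the dual potential.
-/

/-! ### Subgradients of convex functions -/

section HilbertSpace

variable {E : Type*} [NormedAddCommGroup E] [InnerProductSpace ℝ E]

lemma exists_affine_lt_of_notMem [CompleteSpace E] {A : Set (E × ℝ)} (hA : Convex ℝ A)
    (hAo : IsOpen A) {x : E} {s t : ℝ} (hs : (x, s) ∉ A) (ht : (x, t) ∈ A) (hst : s < t) :
    ∃ p : E, ∀ y r, (y, r) ∈ A → s + ⟪p, y - x⟫ < r := by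
  obtain ⟨φ, hφ⟩ := geometric_hahn_banach_point_open hA hAo hs
  have split (y : E) (r : ℝ) : φ (y, r) = φ (y, 0) + r * φ (0, 1) := by
    rw [← smul_eq_mul, ← map_smul, ← map_add]
    simp
  have hσ : 0 < φ (0, 1) := by
    have := hφ _ ht
    rw [split x s, split x t] at this
    nlinarith
  obtain ⟨w, hw⟩ := (InnerProductSpace.toDual ℝ E).surjective (φ.comp (.inl ℝ E ℝ))
  replace hw (y : E) : ⟪w, y⟫ = φ (y, 0) := congr($hw y)
  refine ⟨(-(φ (0, 1))⁻¹) • w, fun y r hyr => lt_of_mul_lt_mul_left ?_ hσ.le⟩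
  have hlt := hφ _ hyr
  rw [split x s, split y r, ← hw, ← hw] at hlt
  rw [real_inner_smul_left, inner_sub_right]
  field_simp
  linarith

lemma convexOn_sub_inner {f : E → ℝ} (hf : ConvexOn ℝ univ f) (p : E) :
    ConvexOn ℝ univ fun y => f y - ⟪p, y⟫ :=
  hf.sub ((innerSL ℝ p).toLinearMap.concaveOn convex_univ)

end HilbertSpace

lemma exists_subgradAt {f : R2 → ℝ} (hf : ConvexOn ℝ univ f) (x : R2) : ∃ p, SubgradAt f x p := by
  have hopen : IsOpen {p : R2 × ℝ | p.1 ∈ univ ∧ f p.1 < p.2} := by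
    have := hf.locallyLipschitz.continuous
    simpa using isOpen_lt (by fun_prop) continuous_snd
  obtain ⟨p, hp⟩ := exists_affine_lt_of_notMem (x := x) (s := f x) (t := f x + 1)
    hf.convex_strict_epigraph hopen (by simp) (by simp) (by linarith)
  exact ⟨p, fun y => le_of_forall_pos_le_add fun ε hε => (hp y (f y + ε) (by simp [hε])).le⟩

/-- The set of all subgradients of `f` at points of `E`, as in the definition of an Alexandrov
solution. -/
def subdiffImage (f : R2 → ℝ) (E : Set R2) : Set R2 := ⋃ x ∈ E, {p : R2 | SubgradAt f x p}

lemma mem_subdiffImage {f : R2 → ℝ} {E : Set R2} {p : R2} :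
    p ∈ subdiffImage f E ↔ ∃ x ∈ E, SubgradAt f x p := by
  simp [subdiffImage]

lemma subgradAt_of_isLocalMin {f : R2 → ℝ} (hf : ConvexOn ℝ univ f) {x p : R2}
    (hx : IsLocalMin (fun y => f y - ⟪p, y⟫) x) : SubgradAt f x p := by
  intro y
  have := IsMinOn.of_isLocalMin_of_convex_univ hx (convexOn_sub_inner hf p) y
  rw [inner_sub_right]
  linarith

/-- The minimum of `f - p` over `D` is attained where `f` is below the affine function bounding it
from below outside `D`, so it is a local minimum on the whole plane. -/
lemma exists_subgradAt_of_affine_le_off_compact {f : R2 → ℝ} (hf : ConvexOn ℝ univ f)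
    {D : Set R2} (hD : IsCompact D) {z q p : R2} {c : ℝ} (hc : 0 < c)
    (hout : ∀ y, y ∉ D → f z + ⟪q, y - z⟫ + c ≤ f y)
    (hin : ∀ y ∈ D, ⟪p - q, y - z⟫ < c) :
    ∃ x ∈ D, f x < f z + ⟪q, x - z⟫ + c ∧ SubgradAt f x p := by
  have hcont := hf.locallyLipschitz.continuous
  have hzD : z ∈ D := by
    by_contra h
    have := hout z h
    rw [sub_self, inner_zero_right] at this
    linarith
  obtain ⟨x, hxD, hx⟩ := hD.exists_isMinOn (f := fun y => f y - ⟪p, y⟫) ⟨z, hzD⟩ (by fun_prop)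
  have hlt : f x < f z + ⟪q, x - z⟫ + c := by
    have hxz : f x - ⟪p, x⟫ ≤ f z - ⟪p, z⟫ := hx hzD
    have := hin x hxD
    rw [inner_sub_left, inner_sub_right] at this
    linarith
  refine ⟨x, hxD, hlt, subgradAt_of_isLocalMin hf ?_⟩
  have hopen : IsOpen {y | f y < f z + ⟪q, y - z⟫ + c} := isOpen_lt hcont (by fun_prop)
  filter_upwards [hopen.mem_nhds hlt] with y hy
  exact hx (not_imp_comm.1 (hout y) (not_le.2 hy))

/-! ### Coordinates -/

lemma R2.inner_eq (x y : R2) : ⟪x, y⟫ = x 0 * y 0 + x 1 * y 1 := by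
  simp [PiLp.inner_apply, Fin.sum_univ_two, mul_comm]

lemma R2.norm_sq_eq (x : R2) : ‖x‖ ^ 2 = x 0 ^ 2 + x 1 ^ 2 := by
  simp [EuclideanSpace.norm_sq_eq, Fin.sum_univ_two]

lemma R2.norm_le (x : R2) : ‖x‖ ≤ |x 0| + |x 1| := by
  refine le_of_sq_le_sq ?_ (by positivity)
  rw [R2.norm_sq_eq, ← sq_abs (x 0), ← sq_abs (x 1)]
  nlinarith [abs_nonneg (x 0), abs_nonneg (x 1)]

lemma SubgradAt.le_add_coord {f : R2 → ℝ} {x p : R2} (h : SubgradAt f x p) (c d : ℝ) :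
    f x + (p 0 * c + p 1 * d) ≤ f !₂[x 0 + c, x 1 + d] := by
  simpa [R2.inner_eq] using h !₂[x 0 + c, x 1 + d]

/-- The coordinate rectangle `[a, b] × [c, d]`. -/
def rect (a b c d : ℝ) : Set R2 := {p | p 0 ∈ Icc a b ∧ p 1 ∈ Icc c d}

lemma isClosed_rect (a b c d : ℝ) : IsClosed (rect a b c d) :=
  (isClosed_Icc.preimage (by fun_prop)).inter (isClosed_Icc.preimage (by fun_prop))

lemma isCompact_rect (a b c d : ℝ) : IsCompact (rect a b c d) := by
  refine Metric.isCompact_of_isClosed_isBounded (isClosed_rect a b c d) ?_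
  refine isBounded_iff_forall_norm_le.2 ⟨max |a| |b| + max |c| |d|, fun p hp => ?_⟩
  exact (R2.norm_le p).trans (add_le_add (abs_le_max_abs_abs hp.1.1 hp.1.2)
    (abs_le_max_abs_abs hp.2.1 hp.2.2))

lemma volume_rect (a b c d : ℝ) :
    volume (rect a b c d) = ENNReal.ofReal (b - a) * ENNReal.ofReal (d - c) := by
  have hpre : rect a b c d = (MeasurableEquiv.toLp 2 (Fin 2 → ℝ)).symm ⁻¹'
      (Set.pi univ fun i => Icc (![a, c] i) (![b, d] i)) := by
    ext p
    simp only [rect, mem_ofPred_eq, mem_preimage, mem_univ_pi, Fin.forall_fin_two]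
    rfl
  rw [hpre, (EuclideanSpace.volume_preserving_symm_measurableEquiv_toLp
    (Fin 2)).measure_preimage_equiv, volume_pi_pi]
  simp [Fin.prod_univ_two]

/-! ### Heinz's estimate on a triangle -/

/-- The Monge–Ampère measure of `f` is at least `κ` times the Lebesgue measure on subsets of `T`. -/
def MongeAmpereGE (κ : ℝ) (f : R2 → ℝ) (T : Set R2) : Prop :=
  ∀ E : Set R2, MeasurableSet E → E ⊆ T → ENNReal.ofReal κ * volume E ≤ volume (subdiffImage f E)

/-- The triangle with vertices `0`, `e₁`, `e₂`. -/
def stdTriangle : Set R2 := {p | 0 ≤ p 0 ∧ 0 ≤ p 1 ∧ p 0 + p 1 ≤ 1}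

/-- The slope of the chord of `f` above the edge `[0, e₁]` of the triangle, taken at its midpoint
and at height `t`, for a function vanishing on that edge. -/
def edgeSlope (f : R2 → ℝ) (t : ℝ) : ℝ := f !₂[1 / 2, t] / t

section Heinz

variable {f : R2 → ℝ} {θ : ℝ}

lemma le_of_mem_edge (hf : ConvexOn ℝ univ f) (h0 : f 0 ≤ θ) (h1 : f !₂[1, 0] ≤ θ) {s : ℝ}
    (hs0 : 0 ≤ s) (hs1 : s ≤ 1) : f !₂[s, 0] ≤ θ := by
  have h := hf.2 (mem_univ !₂[1, 0]) (mem_univ 0) hs0 (sub_nonneg.2 hs1) (by ring)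
  have e : s • (!₂[1, 0] : R2) + (1 - s) • 0 = !₂[s, 0] := by ext i; fin_cases i <;> simp
  rw [e, smul_eq_mul, smul_eq_mul] at h
  nlinarith

/-- The line through `(s', T)` and `(s, t)` meets the edge, because `t` is small compared to `T`. -/
lemma le_chord_add_edge (hf : ConvexOn ℝ univ f) (h0 : f 0 ≤ θ) (h1 : f !₂[1, 0] ≤ θ) (hθ : 0 ≤ θ)
    {s s' t T : ℝ} (hs : s ∈ Icc (1 / 4 : ℝ) (3 / 4)) (hs' : s' ∈ Icc (1 / 4 : ℝ) (3 / 4))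
    (hT : 0 < T) (ht : 0 ≤ t) (htT : 4 * t ≤ T) : f !₂[s, t] ≤ t / T * f !₂[s', T] + θ := by
  obtain ⟨hs1, hs2⟩ := hs
  obtain ⟨hs1', hs2'⟩ := hs'
  obtain ⟨r, rfl⟩ : ∃ r, t = r * T := ⟨t / T, by field_simp⟩
  have hr0 : 0 ≤ r := nonneg_of_mul_nonneg_left ht hT
  have hr : r ≤ 1 / 4 := by nlinarith
  have hr1 : 0 < 1 - r := by linarith
  have h := hf.2 (mem_univ !₂[s', T]) (mem_univ !₂[(s - r * s') / (1 - r), 0]) hr0 hr1.le (by ring)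
  have e : r • (!₂[s', T] : R2) + (1 - r) • !₂[(s - r * s') / (1 - r), 0] = !₂[s, r * T] := by
    ext i; fin_cases i
    · simp; field_simp; ring
    · simp
  have hedge : f !₂[(s - r * s') / (1 - r), 0] ≤ θ :=
    le_of_mem_edge hf h0 h1 (div_nonneg (by nlinarith) hr1.le)
      ((div_le_one hr1).2 (by nlinarith))
  rw [e, smul_eq_mul, smul_eq_mul] at h
  rw [mul_div_cancel_right₀ _ hT.ne']
  nlinarith

lemma le_mul_edgeSlope_add (hf : ConvexOn ℝ univ f) (h0 : f 0 ≤ θ) (h1 : f !₂[1, 0] ≤ θ)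
    (hθ : 0 ≤ θ) {t₀ s t : ℝ} (ht₀ : 0 < t₀) (hs : s ∈ Icc (1 / 4 : ℝ) (3 / 4))
    (ht : t ∈ Icc t₀ (4 * t₀)) : f !₂[s, t] ≤ t * (edgeSlope f (16 * t₀) + θ / t₀) := by
  have h := le_chord_add_edge hf h0 h1 hθ (s' := 1 / 2) (T := 16 * t₀) hs
    (by constructor <;> norm_num) (by positivity) (ht₀.le.trans ht.1) (by linarith [ht.2])
  have hθt : θ ≤ t * (θ / t₀) := by
    rw [mul_div_left_comm]
    exact le_mul_of_one_le_right hθ ((one_le_div ht₀).2 ht.1)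
  calc f !₂[s, t] ≤ t / (16 * t₀) * f !₂[1 / 2, 16 * t₀] + θ := h
    _ = t * edgeSlope f (16 * t₀) + θ := by rw [edgeSlope]; ring
    _ ≤ t * (edgeSlope f (16 * t₀) + θ / t₀) := by linarith

lemma mul_edgeSlope_sub_le (hf : ConvexOn ℝ univ f) (h0 : f 0 ≤ θ) (h1 : f !₂[1, 0] ≤ θ)
    (hθ : 0 ≤ θ) {t₀ s t : ℝ} (ht₀ : 0 < t₀) (hs : s ∈ Icc (1 / 4 : ℝ) (3 / 4)) (ht : t₀ ≤ t) :
    t * (edgeSlope f (t₀ / 4) - 4 * θ / t₀) ≤ f !₂[s, t] := by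
  have htpos : 0 < t := ht₀.trans_le ht
  have h := le_chord_add_edge hf h0 h1 hθ (s := 1 / 2) (t := t₀ / 4)
    (by constructor <;> norm_num) hs htpos (by positivity) (by linarith)
  have hfrac : t₀ / 4 * (t * (edgeSlope f (t₀ / 4) - 4 * θ / t₀)) ≤ t₀ / 4 * f !₂[s, t] := by
    calc t₀ / 4 * (t * (edgeSlope f (t₀ / 4) - 4 * θ / t₀))
        = t * (f !₂[1 / 2, t₀ / 4] - θ) := by rw [edgeSlope]; field_simp
      _ ≤ t * (t₀ / 4 / t * f !₂[s, t]) := by gcongr; linarith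
      _ = t₀ / 4 * f !₂[s, t] := by field_simp
  exact le_of_mul_le_mul_left hfrac (by positivity)

lemma subdiffImage_subset_rect {B ε t₀ : ℝ} (ht₀ : 0 < t₀) (hε : 0 ≤ ε)
    (hlower : ∀ s ∈ Icc (1 / 4 : ℝ) (3 / 4), ∀ t ∈ Icc t₀ (4 * t₀), t * B ≤ f !₂[s, t])
    (hupper : ∀ s ∈ Icc (1 / 4 : ℝ) (3 / 4), ∀ t ∈ Icc t₀ (4 * t₀), f !₂[s, t] ≤ t * (B + ε)) :
    subdiffImage f (rect (3 / 8) (5 / 8) (2 * t₀) (3 * t₀)) ⊆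
      rect (-(24 * t₀ * ε)) (24 * t₀ * ε) (B - 4 * ε) (B + 4 * ε) := by
  intro p hp
  obtain ⟨x, ⟨⟨hx1, hx2⟩, hx3, hx4⟩, hpx⟩ := mem_subdiffImage.1 hp
  have increment (c d : ℝ) (hc : |c| ≤ 1 / 8) (hd : |d| ≤ t₀) :
      p 0 * c + p 1 * d ≤ d * B + (x 1 + d) * ε := by
    have hc := abs_le.1 hc
    have hd := abs_le.1 hd
    have hup := hupper (x 0 + c) ⟨by linarith, by linarith⟩ (x 1 + d) ⟨by linarith, by linarith⟩
    have hlow := hlower (x 0) ⟨by linarith, by linarith⟩ (x 1) ⟨by linarith, by linarith⟩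
    have ex : !₂[x 0, x 1] = x := by ext i; fin_cases i <;> rfl
    rw [ex] at hlow
    linarith [hpx.le_add_coord c d]
  have hx1ε : x 1 * ε ≤ 3 * t₀ * ε := mul_le_mul_of_nonneg_right hx4 hε
  have habs : |t₀| ≤ t₀ := (abs_of_pos ht₀).le
  have hright := increment (1 / 8) 0 (by norm_num) (by simpa using ht₀.le)
  have hleft := increment (-(1 / 8)) 0 (by norm_num) (by simpa using ht₀.le)
  have hup := increment 0 t₀ (by norm_num) habs
  have hdown := increment 0 (-t₀) (by norm_num) (by rwa [abs_neg])
  exact ⟨⟨by linarith, by linarith⟩, le_of_mul_le_mul_left (by linarith) ht₀,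
    le_of_mul_le_mul_left (by linarith) ht₀⟩

lemma MongeAmpereGE.le_sq_of_linear_bounds {κ B ε t₀ : ℝ} {T : Set R2} (hm : MongeAmpereGE κ f T)
    (hκ : 0 ≤ κ) (ht₀ : 0 < t₀) (hε : 0 ≤ ε)
    (hT : rect (3 / 8) (5 / 8) (2 * t₀) (3 * t₀) ⊆ T)
    (hlower : ∀ s ∈ Icc (1 / 4 : ℝ) (3 / 4), ∀ t ∈ Icc t₀ (4 * t₀), t * B ≤ f !₂[s, t])
    (hupper : ∀ s ∈ Icc (1 / 4 : ℝ) (3 / 4), ∀ t ∈ Icc t₀ (4 * t₀), f !₂[s, t] ≤ t * (B + ε)) :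
    κ / 1536 ≤ ε ^ 2 := by
  have hvol := (hm _ (isClosed_rect _ _ _ _).measurableSet hT).trans
    (measure_mono (subdiffImage_subset_rect ht₀ hε hlower hupper))
  have htε : 0 ≤ t₀ * ε := mul_nonneg ht₀.le hε
  rw [volume_rect, volume_rect, ← ENNReal.ofReal_mul (by norm_num), ← ENNReal.ofReal_mul hκ,
    ← ENNReal.ofReal_mul (by linarith), ENNReal.ofReal_le_ofReal_iff
      (mul_nonneg (by linarith) (by linarith))] at hvol
  have : t₀ * (κ / 1536) ≤ t₀ * ε ^ 2 := by linarith
  exact le_of_mul_le_mul_left this ht₀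

/-- With `B` the lower and `B + ε` the upper slope bound near height `t₀`, the subgradients there
fill an area of order `t₀ ε²`, which has to be at least of order `κ t₀`. -/
lemma sqrt_le_edgeSlope_sub (hf : ConvexOn ℝ univ f) {κ t₀ : ℝ} (h0 : f 0 ≤ θ)
    (h1 : f !₂[1, 0] ≤ θ) (hθ : 0 ≤ θ) (ht₀ : 0 < t₀) (ht₀' : t₀ ≤ 1 / 32) (hκ : 0 ≤ κ)
    (hm : MongeAmpereGE κ f stdTriangle) :
    √(κ / 1536) ≤ edgeSlope f (16 * t₀) - edgeSlope f (t₀ / 4) + 5 * θ / t₀ := by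
  set ε := edgeSlope f (16 * t₀) - edgeSlope f (t₀ / 4) + 5 * θ / t₀ with hε
  set B := edgeSlope f (t₀ / 4) - 4 * θ / t₀ with hB
  have hBε : edgeSlope f (16 * t₀) + θ / t₀ = B + ε := by rw [hB, hε]; ring
  have hlower : ∀ s ∈ Icc (1 / 4 : ℝ) (3 / 4), ∀ t ∈ Icc t₀ (4 * t₀), t * B ≤ f !₂[s, t] :=
    fun s hs t ht => mul_edgeSlope_sub_le hf h0 h1 hθ ht₀ hs ht.1
  have hupper : ∀ s ∈ Icc (1 / 4 : ℝ) (3 / 4), ∀ t ∈ Icc t₀ (4 * t₀), f !₂[s, t] ≤ t * (B + ε) :=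
    fun s hs t ht => hBε ▸ le_mul_edgeSlope_add hf h0 h1 hθ ht₀ hs ht
  have hε0 : 0 ≤ ε := by
    have hs : (1 / 2 : ℝ) ∈ Icc (1 / 4 : ℝ) (3 / 4) := by constructor <;> norm_num
    have ht : t₀ ∈ Icc t₀ (4 * t₀) := by constructor <;> linarith
    have : t₀ * B ≤ t₀ * (B + ε) := (hlower _ hs _ ht).trans (hupper _ hs _ ht)
    linarith [le_of_mul_le_mul_left this ht₀]
  refine Real.sqrt_le_iff.2 ⟨hε0, hm.le_sq_of_linear_bounds hκ ht₀ hε0 ?_ hlower hupper⟩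
  rintro p ⟨⟨hp1, hp2⟩, hp3, hp4⟩
  exact ⟨by linarith, by linarith, by linarith⟩

lemma mul_sqrt_le_edgeSlope_sub (hf : ConvexOn ℝ univ f) {κ : ℝ} (h0 : f 0 ≤ θ)
    (h1 : f !₂[1, 0] ≤ θ) (hθ : 0 ≤ θ) (hκ : 0 ≤ κ) (hm : MongeAmpereGE κ f stdTriangle) {n : ℕ}
    (hn : θ * (320 * 64 ^ n) ≤ √(κ / 1536)) :
    n * (√(κ / 1536) / 2) ≤ edgeSlope f (1 / 2) - edgeSlope f ((64 ^ n)⁻¹ / 2) := by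
  let a : ℕ → ℝ := fun k => edgeSlope f ((64 ^ k)⁻¹ / 2)
  have hdrop : ∀ k ∈ Finset.range n, √(κ / 1536) / 2 ≤ a k - a (k + 1) := by
    intro k hk
    have hinv : ((64 : ℝ) ^ k)⁻¹ ≤ 1 := inv_le_one_of_one_le₀ (one_le_pow₀ (by norm_num))
    have h := sqrt_le_edgeSlope_sub hf (t₀ := (64 ^ k)⁻¹ / 32) h0 h1 hθ (by positivity)
      (by linarith) hκ hm
    have e1 : 16 * ((64 ^ k : ℝ)⁻¹ / 32) = (64 ^ k)⁻¹ / 2 := by ring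
    have e2 : ((64 ^ k : ℝ)⁻¹ / 32) / 4 = (64 ^ (k + 1))⁻¹ / 2 := by rw [pow_succ, mul_inv]; ring
    have e3 : 5 * θ / ((64 ^ k : ℝ)⁻¹ / 32) = 160 * (θ * 64 ^ k) := by field_simp; ring
    have hθk : θ * 64 ^ k ≤ θ * 64 ^ n := by
      gcongr
      · norm_num
      · exact (Finset.mem_range.1 hk).le
    rw [e1, e2, e3] at h
    linarith
  have := Finset.card_nsmul_le_sum _ _ _ hdrop
  rw [Finset.sum_range_sub', Finset.card_range, nsmul_eq_mul] at this
  simpa [a] using this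

/-- Heinz's argument: the chord slopes at the heights `64⁻ᵏ / 2` drop by a fixed amount at each
step, but they are nonnegative and bounded by `2` at the start. -/
theorem exists_lt_max_of_mongeAmpereGE {κ : ℝ} (hκ : 0 < κ) : ∃ θ : ℝ, 0 < θ ∧
    ∀ f : R2 → ℝ, ConvexOn ℝ univ f → (∀ x, 0 ≤ f x) → f !₂[0, 1] ≤ 1 →
      MongeAmpereGE κ f stdTriangle → θ < max (f 0) (f !₂[1, 0]) := by
  have hc : 0 < √(κ / 1536) := Real.sqrt_pos.2 (by positivity)
  obtain ⟨n, hn⟩ := exists_nat_gt (4 / √(κ / 1536))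
  rw [div_lt_iff₀ hc] at hn
  refine ⟨min 1 (√(κ / 1536) / (320 * 64 ^ n)), lt_min one_pos (by positivity),
    fun f hf hf0 h2 hm => ?_⟩
  by_contra! hmax
  obtain ⟨h0, h1⟩ := max_le_iff.1 hmax
  have hsum := mul_sqrt_le_edgeSlope_sub hf h0 h1 (le_min zero_le_one (by positivity)) hκ.le hm
    ((le_div_iff₀ (by positivity)).1 (min_le_right _ _))
  have hstart : edgeSlope f (1 / 2) ≤ 2 := by
    have h := hf.2 (mem_univ !₂[1, 0]) (mem_univ !₂[0, 1])
      (by norm_num : (0 : ℝ) ≤ 1 / 2) (by norm_num : (0 : ℝ) ≤ 1 / 2) (by norm_num)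
    have e : (1 / 2 : ℝ) • (!₂[1, 0] : R2) + (1 / 2 : ℝ) • !₂[0, 1] = !₂[1 / 2, 1 / 2] := by
      ext i; fin_cases i <;> norm_num
    have := h1.trans (min_le_left _ _)
    rw [e, smul_eq_mul, smul_eq_mul] at h
    rw [edgeSlope]
    linarith
  have hend : 0 ≤ edgeSlope f ((64 ^ n)⁻¹ / 2) := div_nonneg (hf0 _) (by positivity)
  linarith

end Heinz

/-! ### Affine changes of variables in the Monge–Ampère equation -/

/-- `f` is an Alexandrov solution of `det D² f = κ χ_Ω`. -/
def HasMongeAmpere (κ : ℝ) (f : R2 → ℝ) (Ω : Set R2) : Prop :=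
  ∀ E : Set R2, MeasurableSet E →
    volume (subdiffImage f E) = ENNReal.ofReal κ * volume (E ∩ Ω)

lemma AlexandrovSol.hasMongeAmpere_closure {f : R2 → ℝ} {Ω : Set R2} (h : AlexandrovSol f Ω)
    (hΩ : Convex ℝ Ω) : HasMongeAmpere 1 f (closure Ω) := by
  intro E hE
  have hae : closure Ω =ᵐ[volume] Ω := by
    refine (ae_eq_set.2 ⟨measure_mono_null ?_ (hΩ.addHaar_frontier volume), ?_⟩)
    · exact sdiff_subset_sdiff_right interior_subset
    · simp [sdiff_eq_empty.2 subset_closure]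
  rw [ENNReal.ofReal_one, one_mul, measure_congr (ae_eq_set_inter (ae_eq_refl E) hae)]
  exact h E hE

lemma HasMongeAmpere.mongeAmpereGE {κ κ' : ℝ} {f : R2 → ℝ} {Ω T : Set R2}
    (h : HasMongeAmpere κ f Ω) (hκ : κ' ≤ κ) (hT : T ⊆ Ω) : MongeAmpereGE κ' f T := by
  intro E hE hET
  rw [h E hE, inter_eq_left.2 (hET.trans hT)]
  gcongr

lemma subdiffImage_eq_image {f g : R2 → ℝ} {Φ Ψ : R2 → R2} (hΨ : Function.Surjective Ψ)
    (h : ∀ x p, SubgradAt g x (Ψ p) ↔ SubgradAt f (Φ x) p) (E : Set R2) :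
    subdiffImage g E = Ψ '' subdiffImage f (Φ '' E) := by
  ext p
  obtain ⟨p, rfl⟩ := hΨ p
  simp only [mem_subdiffImage, mem_image, exists_exists_and_eq_and]
  constructor
  · rintro ⟨x, hx, hp⟩
    exact ⟨p, ⟨x, hx, (h x p).1 hp⟩, rfl⟩
  · rintro ⟨p', ⟨x, hx, hp'⟩, hpp'⟩
    exact ⟨x, hx, hpp' ▸ (h x p').2 hp'⟩

lemma HasMongeAmpere.const_mul {κ s : ℝ} {f : R2 → ℝ} {Ω : Set R2} (h : HasMongeAmpere κ f Ω)
    (hs : 0 < s) : HasMongeAmpere (s ^ 2 * κ) (fun x => s * f x) Ω := by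
  intro E hE
  have hsub (x p : R2) : SubgradAt (fun x => s * f x) x (s • p) ↔ SubgradAt f (id x) p := by
    simp only [SubgradAt, real_inner_smul_left, ← mul_add, mul_le_mul_iff_right₀ hs, id]
  have hsurj : Function.Surjective fun p : R2 => s • p := (MulAction.bijective₀ hs.ne').2
  rw [subdiffImage_eq_image hsurj hsub, image_id, image_smul, Measure.addHaar_smul, h E hE,
    ← mul_assoc, ← ENNReal.ofReal_mul (abs_nonneg _), finrank_euclideanSpace_fin,
    abs_of_pos (by positivity)]

lemma HasMongeAmpere.comp_add_sub_affine {κ : ℝ} {f : R2 → ℝ} {Ω : Set R2}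
    (h : HasMongeAmpere κ f Ω) (m q : R2) (c : ℝ) :
    HasMongeAmpere κ (fun x => f (m + x) - ⟪q, x⟫ - c) ((m + ·) ⁻¹' Ω) := by
  intro E hE
  have hsub (x p : R2) : SubgradAt (fun x => f (m + x) - ⟪q, x⟫ - c) x (-q + p) ↔
      SubgradAt f (m + x) p := by
    refine Iff.trans (forall_congr' fun y => ?_) (add_left_surjective m).forall.symm
    rw [add_sub_add_left_eq_sub, inner_add_left, inner_neg_left, inner_sub_right q]
    constructor <;> intro h <;> linarith
  rw [subdiffImage_eq_image (add_left_surjective (-q)) hsub, image_add_left, measure_preimage_add,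
    h _ ((measurableEmbedding_addLeft m).measurableSet_image.2 hE), ← image_inter_preimage,
    image_add_left, measure_preimage_add]

lemma det_adjoint_eq (A : R2 →ₗ[ℝ] R2) : LinearMap.det A.adjoint = LinearMap.det A := by
  let b := EuclideanSpace.basisFun (Fin 2) ℝ
  rw [← LinearMap.det_toMatrix b.toBasis, ← LinearMap.det_toMatrix b.toBasis,
    LinearMap.toMatrix_adjoint, Matrix.det_conjTranspose, star_trivial]

lemma HasMongeAmpere.comp_linearMap {κ : ℝ} {f : R2 → ℝ} {Ω : Set R2} (h : HasMongeAmpere κ f Ω)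
    (A : R2 →ₗ[ℝ] R2) (hA : LinearMap.det A ≠ 0) :
    HasMongeAmpere (LinearMap.det A ^ 2 * κ) (fun x => f (A x)) (A ⁻¹' Ω) := by
  intro E hE
  have hbij : Function.Bijective A := (LinearMap.equivOfDetNeZero A hA).bijective
  have hbij' : Function.Bijective A.adjoint :=
    (LinearMap.equivOfDetNeZero A.adjoint ((det_adjoint_eq A).symm ▸ hA)).bijective
  have hsub (x p : R2) : SubgradAt (fun x => f (A x)) x (A.adjoint p) ↔ SubgradAt f (A x) p := by
    refine Iff.trans (forall_congr' fun y => ?_) hbij.2.forall.symm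
    rw [LinearMap.adjoint_inner_left, map_sub]
  have hAE : MeasurableSet (A '' E) :=
    hE.image_of_continuousOn_injOn A.continuous_of_finiteDimensional.continuousOn hbij.1.injOn
  rw [subdiffImage_eq_image hbij'.2 hsub, Measure.addHaar_image_linearMap, det_adjoint_eq, h _ hAE,
    ← image_inter_preimage, Measure.addHaar_image_linearMap, ← sq_abs (LinearMap.det A),
    ENNReal.ofReal_mul (by positivity), ENNReal.ofReal_pow (abs_nonneg _)]
  ring

/-- The linear map sending the standard basis to `(a, b)`. -/
def frame (a b : R2) : R2 →ₗ[ℝ] R2 := Matrix.toEuclideanLin !![a 0, b 0; a 1, b 1]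

lemma frame_apply (a b x : R2) : frame a b x = x 0 • a + x 1 • b := by
  ext i
  fin_cases i <;> simp [frame, Matrix.toLpLin_apply, dotProduct, Fin.sum_univ_two, mul_comm]

lemma det_frame (a b : R2) : LinearMap.det (frame a b) = det2 a b := by
  rw [frame, Matrix.toEuclideanLin_eq_toLin_orthonormal, LinearMap.det_toLin, Matrix.det_fin_two_of,
    det2]
  ring

/-! ### Solutions normalized at a point of the domain -/

lemma map_smul_add_smul_le {E : Type*} [AddCommGroup E] [Module ℝ E] {g : E → ℝ}
    (hg : ConvexOn ℝ univ g) (h0 : g 0 = 0) {r t : ℝ} (hr : 0 ≤ r) (ht : 0 ≤ t) (hrt : r + t ≤ 1)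
    (a b : E) : g (r • a + t • b) ≤ r * g a + t * g b := by
  have := hg.map_sum_le (t := Finset.univ) (w := ![r, t, 1 - (r + t)]) (p := ![a, b, 0])
    (by simp [Fin.forall_fin_succ, hr, ht, hrt]) (by simp [Fin.sum_univ_three]) (by simp)
  simpa [Fin.sum_univ_three, h0] using this

lemma smul_add_smul_mem {E : Type*} [AddCommGroup E] [Module ℝ E] {s : Set E} (hs : Convex ℝ s)
    (h0 : 0 ∈ s) {r t : ℝ} (hr : 0 ≤ r) (ht : 0 ≤ t) (hrt : r + t ≤ 1) {a b : E} (ha : a ∈ s)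
    (hb : b ∈ s) : r • a + t • b ∈ s := by
  have := hs.sum_mem (t := Finset.univ) (w := ![r, t, 1 - (r + t)]) (z := ![a, b, 0])
    (by simp [Fin.forall_fin_succ, hr, ht, hrt]) (by simp [Fin.sum_univ_three])
    (by simp [Fin.forall_fin_succ, ha, hb, h0])
  simpa [Fin.sum_univ_three] using this

lemma HasMongeAmpere.mongeAmpereGE_comp_frame {κ κ' : ℝ} {f : R2 → ℝ} {Ω : Set R2}
    (h : HasMongeAmpere κ f Ω) (hΩ : Convex ℝ Ω) (h0 : 0 ∈ Ω) {a b : R2} (ha : a ∈ Ω) (hb : b ∈ Ω)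
    (hab : det2 a b ≠ 0) (hκ' : κ' ≤ det2 a b ^ 2 * κ) :
    MongeAmpereGE κ' (fun x => f (frame a b x)) stdTriangle := by
  have hMA := h.comp_linearMap (frame a b) (by rwa [det_frame])
  rw [det_frame] at hMA
  refine hMA.mongeAmpereGE hκ' fun x ⟨hx0, hx1, hx⟩ => ?_
  rw [mem_preimage, frame_apply]
  exact smul_add_smul_mem hΩ h0 hx0 hx1 hx ha hb

open scoped Pointwise in
lemma ofReal_pow_mul_measure_inter_le {E : Type*} [NormedAddCommGroup E] [NormedSpace ℝ E]
    [FiniteDimensional ℝ E] [MeasurableSpace E] [BorelSpace E] (μ : Measure E) [μ.IsAddHaarMeasure]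
    {Ω : Set E} (hΩ : Convex ℝ Ω) (h0 : 0 ∈ Ω) (D : Set E) {r : ℝ} (hr : 0 ≤ r) (hr1 : r ≤ 1) :
    ENNReal.ofReal (r ^ Module.finrank ℝ E) * μ (D ∩ Ω) ≤ μ (r • D ∩ Ω) := by
  have hsub : r • (D ∩ Ω) ⊆ r • D ∩ Ω := by
    rintro _ ⟨x, ⟨hxD, hxΩ⟩, rfl⟩
    exact ⟨smul_mem_smul_set hxD, hΩ.smul_mem_of_zero_mem h0 hxΩ ⟨hr, hr1⟩⟩
  simpa [Measure.addHaar_smul, abs_of_nonneg hr] using measure_mono (μ := μ) hsub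

/-- An Alexandrov solution `g` of `det D² g = κ χ_Ω` renormalized at a point of the closed convex
domain `Ω`: the point is moved to `0` and a supporting affine function is subtracted, so that `0`
is the minimal value of `g`, attained at `0`. -/
structure NormalizedSol (κ : ℝ) (g : R2 → ℝ) (Ω : Set R2) : Prop where
  coeff_nonneg : 0 ≤ κ
  convexOn : ConvexOn ℝ univ g
  nonneg : ∀ x, 0 ≤ g x
  map_zero : g 0 = 0
  isClosed : IsClosed Ω
  convex : Convex ℝ Ω
  zero_mem : 0 ∈ Ω
  hasMongeAmpere : HasMongeAmpere κ g Ω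

namespace NormalizedSol

variable {κ : ℝ} {g : R2 → ℝ} {Ω : Set R2}

lemma const_mul (h : NormalizedSol κ g Ω) {s : ℝ} (hs : 0 < s) :
    NormalizedSol (s ^ 2 * κ) (fun x => s * g x) Ω where
  coeff_nonneg := mul_nonneg (sq_nonneg s) h.coeff_nonneg
  convexOn := h.convexOn.smul hs.le
  nonneg x := mul_nonneg hs.le (h.nonneg x)
  map_zero := by rw [h.map_zero, mul_zero]
  isClosed := h.isClosed
  convex := h.convex
  zero_mem := h.zero_mem
  hasMongeAmpere := h.hasMongeAmpere.const_mul hs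

lemma comp_linearMap (h : NormalizedSol κ g Ω) (A : R2 →ₗ[ℝ] R2) (hA : LinearMap.det A ≠ 0) :
    NormalizedSol (LinearMap.det A ^ 2 * κ) (fun x => g (A x)) (A ⁻¹' Ω) where
  coeff_nonneg := mul_nonneg (sq_nonneg _) h.coeff_nonneg
  convexOn := h.convexOn.comp_linearMap A
  nonneg x := h.nonneg _
  map_zero := by rw [_root_.map_zero, h.map_zero]
  isClosed := h.isClosed.preimage A.continuous_of_finiteDimensional
  convex := h.convex.linear_preimage A
  zero_mem := by simpa using h.zero_mem
  hasMongeAmpere := h.hasMongeAmpere.comp_linearMap A hA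

end NormalizedSol

lemma AlexandrovSol.normalizedSol {f : R2 → ℝ} {Ω : Set R2} (h : AlexandrovSol f Ω)
    (hf : ConvexOn ℝ univ f) (hΩ : Convex ℝ Ω) {m q : R2} (hm : m ∈ closure Ω)
    (hq : SubgradAt f m q) :
    NormalizedSol 1 (fun x => f (m + x) - ⟪q, x⟫ - f m) ((m + ·) ⁻¹' closure Ω) where
  coeff_nonneg := zero_le_one
  convexOn := (convexOn_sub_inner (f := fun x => f (m + x)) (hf.translate_right m) q).sub
    (concaveOn_const _ convex_univ)
  nonneg x := by linarith [add_sub_cancel_left m x ▸ hq (m + x)]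
  map_zero := by simp
  isClosed := isClosed_closure.preimage (by fun_prop)
  convex := hΩ.closure.translate_preimage_right m
  zero_mem := by simpa using hm
  hasMongeAmpere := (h.hasMongeAmpere_closure hΩ).comp_add_sub_affine m q (f m)

/-! ### A lower bound for a confined solution -/

lemma rect_subset_subdiffImage {f : R2 → ℝ} (hf : ConvexOn ℝ univ f) (h0 : f 0 = 0) {q : R2}
    {a b c : ℝ} (ha : 0 < a) (hb : 0 < b) (hc : 0 < c)
    (hout : ∀ x, x ∉ rect (-a) a (-b) b → ⟪q, x⟫ + c ≤ f x) :
    rect (q 0 - c / (4 * a)) (q 0 + c / (4 * a)) (q 1 - c / (4 * b)) (q 1 + c / (4 * b)) ⊆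
      subdiffImage f (rect (-a) a (-b) b) := by
  rintro p ⟨⟨hp1, hp2⟩, hp3, hp4⟩
  suffices hin : ∀ y ∈ rect (-a) a (-b) b, ⟪p - q, y - 0⟫ < c by
    obtain ⟨x, hx, -, hxp⟩ := exists_subgradAt_of_affine_le_off_compact hf
      (isCompact_rect (-a) a (-b) b) hc (fun y hy => by simpa [h0] using hout y hy) hin
    exact mem_subdiffImage.2 ⟨x, hx, hxp⟩
  intro y hy
  have hp0 : |p 0 - q 0| ≤ c / (4 * a) := abs_le.2 ⟨by linarith, by linarith⟩
  have hp1 : |p 1 - q 1| ≤ c / (4 * b) := abs_le.2 ⟨by linarith, by linarith⟩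
  calc ⟪p - q, y - 0⟫ = (p 0 - q 0) * y 0 + (p 1 - q 1) * y 1 := by simp [R2.inner_eq]
    _ ≤ |p 0 - q 0| * |y 0| + |p 1 - q 1| * |y 1| := by
      rw [← abs_mul, ← abs_mul]
      exact add_le_add (le_abs_self _) (le_abs_self _)
    _ ≤ c / (4 * a) * a + c / (4 * b) * b := by
      have := abs_le.2 hy.1
      have := abs_le.2 hy.2
      gcongr
    _ = c / 2 := by field_simp; ring
    _ < c := half_lt_self hc

namespace NormalizedSol

variable {κ : ℝ} {g : R2 → ℝ} {Ω : Set R2}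

lemma ofReal_le_mul_volume_of_le_off_rect (h : NormalizedSol κ g Ω) {R : ℝ} (hR : 8 ≤ R) {q : R2}
    (hout : ∀ x, x ∉ rect (-R) R (-8) 8 → ⟪q, x⟫ + 1 / 4 ≤ g x) :
    ENNReal.ofReal ((1 / (8 * R)) ^ 2 * (1 / (512 * R))) ≤
      ENNReal.ofReal κ * volume (rect (-(1 / 8)) (1 / 8) (-(1 / 8)) (1 / 8) ∩ Ω) := by
  have hR0 : 0 < R := by linarith
  have hr1 : 1 / (8 * R) ≤ 1 := by rw [div_le_one (by positivity)]; linarith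
  have hlarge : ENNReal.ofReal (1 / (512 * R)) ≤
      ENNReal.ofReal κ * volume (rect (-R) R (-8) 8 ∩ Ω) := by
    have hsub := rect_subset_subdiffImage h.convexOn h.map_zero hR0 (by norm_num) (by norm_num) hout
    rw [← h.hasMongeAmpere _ (isClosed_rect _ _ _ _).measurableSet]
    refine le_of_eq_of_le ?_ (measure_mono hsub)
    rw [volume_rect, ← ENNReal.ofReal_mul (by ring_nf; positivity)]
    congr 1
    field_simp
    ring
  have hshrink := ofReal_pow_mul_measure_inter_le volume h.convex h.zero_mem (rect (-R) R (-8) 8)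
    (r := 1 / (8 * R)) (by positivity) hr1
  rw [finrank_euclideanSpace_fin] at hshrink
  calc ENNReal.ofReal ((1 / (8 * R)) ^ 2 * (1 / (512 * R)))
      = ENNReal.ofReal ((1 / (8 * R)) ^ 2) * ENNReal.ofReal (1 / (512 * R)) :=
        ENNReal.ofReal_mul (by positivity)
    _ ≤ ENNReal.ofReal ((1 / (8 * R)) ^ 2) *
        (ENNReal.ofReal κ * volume (rect (-R) R (-8) 8 ∩ Ω)) := by gcongr
    _ = ENNReal.ofReal κ *
        (ENNReal.ofReal ((1 / (8 * R)) ^ 2) * volume (rect (-R) R (-8) 8 ∩ Ω)) := by ring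
    _ ≤ _ := by
      gcongr
      refine hshrink.trans (measure_mono (inter_subset_inter_left _ ?_))
      rintro _ ⟨x, ⟨⟨hx1, hx2⟩, hx3, hx4⟩, rfl⟩
      have hrR : 1 / (8 * R) * R = 1 / 8 := by field_simp
      have hr8 : 1 / (8 * R) * 8 ≤ 1 / 8 := by
        rw [one_div_mul_eq_div, div_le_div_iff₀ (by positivity) (by norm_num)]
        linarith
      have hr : 0 < 1 / (8 * R) := by positivity
      simp only [rect, mem_Icc, mem_ofPred_eq, PiLp.smul_apply, smul_eq_mul]
      refine ⟨⟨?_, ?_⟩, ?_, ?_⟩ <;> nlinarith [hrR, hr8, hr]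

lemma le_mul_of_abs_le (h : NormalizedSol κ g Ω) {c T : ℝ} (hT : 0 ≤ T)
    (hvol : ENNReal.ofReal c ≤
      ENNReal.ofReal κ * volume (rect (-(1 / 8)) (1 / 8) (-(1 / 8)) (1 / 8) ∩ Ω))
    (hVT : ∀ x ∈ rect (-(1 / 8)) (1 / 8) (-(1 / 8)) (1 / 8) ∩ Ω, |x 1| ≤ T) : 2 * c ≤ κ * T := by
  have hsub : rect (-(1 / 8)) (1 / 8) (-(1 / 8)) (1 / 8) ∩ Ω ⊆ rect (-(1 / 8)) (1 / 8) (-T) T :=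
    fun x hx => ⟨hx.1.1, abs_le.1 (hVT x hx)⟩
  have hle := hvol.trans (mul_le_mul_right (measure_mono hsub) (ENNReal.ofReal κ))
  have hκT := mul_nonneg h.coeff_nonneg hT
  rw [volume_rect, ← ENNReal.ofReal_mul (by norm_num), ← ENNReal.ofReal_mul h.coeff_nonneg,
    ENNReal.ofReal_le_ofReal_iff (by nlinarith)] at hle
  linarith

lemma le_add_two_mul_abs (h : NormalizedSol κ g Ω) (hcross : ∀ x, |x 0| + |x 1| ≤ 1 → g x ≤ 2)
    {s t : ℝ} (hs : 0 ≤ s) (hst : s + |t| ≤ 1) : g !₂[s, t] ≤ g !₂[1, 0] + 2 * |t| := by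
  obtain ⟨e, he, hte⟩ : ∃ e : ℝ, |e| = 1 ∧ |t| * e = t := by
    rcases le_total 0 t with ht | ht
    · exact ⟨1, by simp, by simp [abs_of_nonneg ht]⟩
    · exact ⟨-1, by simp, by simp [abs_of_nonpos ht]⟩
  have hmap := map_smul_add_smul_le h.convexOn h.map_zero hs (abs_nonneg t) hst !₂[1, 0] !₂[0, e]
  have hsum : s • (!₂[1, 0] : R2) + |t| • !₂[0, e] = !₂[s, t] := by
    ext i; fin_cases i <;> simp [hte]
  rw [hsum] at hmap
  have he2 : g !₂[0, e] ≤ 2 := hcross _ (by simp [he])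
  nlinarith [h.nonneg !₂[1, 0], abs_nonneg t]

lemma subdiffImage_middle_subset (h : NormalizedSol κ g Ω)
    (hcross : ∀ x, |x 0| + |x 1| ≤ 1 → g x ≤ 2) {T : ℝ} (hT : T ≤ 1 / 8) :
    subdiffImage g (rect (7 / 16) (9 / 16) (-(T / 2)) (T / 2)) ⊆
      rect (-(8 * (g !₂[1, 0] + T))) (8 * (g !₂[1, 0] + T)) (-8) 8 := by
  intro p hp
  obtain ⟨x, ⟨⟨hx1, hx2⟩, hx⟩, hpx⟩ := mem_subdiffImage.1 hp
  have hxT : |x 1| ≤ T / 2 := abs_le.2 hx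
  have hgx := h.nonneg x
  have hleft := hpx.le_add_coord (-(1 / 8)) 0
  have hright := hpx.le_add_coord (1 / 8) 0
  have hdown := hpx.le_add_coord 0 (-(1 / 4))
  have hup := hpx.le_add_coord 0 (1 / 4)
  rw [add_zero] at hleft hright
  have hleft' := h.le_add_two_mul_abs hcross (s := x 0 + -(1 / 8)) (t := x 1) (by linarith)
    (by linarith)
  have hright' := h.le_add_two_mul_abs hcross (s := x 0 + 1 / 8) (t := x 1) (by linarith)
    (by linarith)
  have hvert (d : ℝ) (hd : |d| = 1 / 4) : g !₂[x 0 + 0, x 1 + d] ≤ 2 := by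
    refine hcross _ ?_
    simp only [Matrix.cons_val_zero, Matrix.cons_val_one, add_zero]
    linarith [abs_add_le (x 1) d, abs_of_nonneg (by linarith : 0 ≤ x 0)]
  have hdown' := hvert (-(1 / 4)) (by norm_num)
  have hup' := hvert (1 / 4) (by norm_num)
  exact ⟨⟨by linarith, by linarith⟩, by linarith, by linarith⟩

lemma le_mul_apply_add (h : NormalizedSol κ g Ω) (hcross : ∀ x, |x 0| + |x 1| ≤ 1 → g x ≤ 2)
    (h1Ω : !₂[1, 0] ∈ Ω) {c T : ℝ} (hT0 : 0 ≤ T) (hT : T ≤ 1 / 8)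
    (hvol : ENNReal.ofReal c ≤
      ENNReal.ofReal κ * volume (rect (-(1 / 8)) (1 / 8) (-(1 / 8)) (1 / 8) ∩ Ω))
    (hVT : ∀ x ∈ rect (-(1 / 8)) (1 / 8) (-(1 / 8)) (1 / 8) ∩ Ω, |x 1| ≤ T) :
    c ≤ 1024 * (g !₂[1, 0] + T) := by
  set V := rect (-(1 / 8)) (1 / 8) (-(1 / 8)) (1 / 8) ∩ Ω
  set W := rect (7 / 16) (9 / 16) (-(T / 2)) (T / 2)
  have hW : AffineMap.homothety !₂[1, 0] (1 / 2 : ℝ) '' V ⊆ W ∩ Ω := by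
    rintro _ ⟨x, hx, rfl⟩
    obtain ⟨hx3, hx4⟩ := abs_le.1 (hVT x hx)
    obtain ⟨⟨⟨hx1, hx2⟩, -⟩, hxΩ⟩ := hx
    refine ⟨⟨⟨?_, ?_⟩, ?_, ?_⟩, ?_⟩
    rotate_left 4
    · rw [AffineMap.homothety_eq_lineMap]
      exact h.convex.lineMap_mem h1Ω hxΩ ⟨by norm_num, by norm_num⟩
    all_goals
      simp only [AffineMap.homothety_apply, vsub_eq_sub, vadd_eq_add, PiLp.add_apply,
        PiLp.smul_apply, PiLp.sub_apply, Matrix.cons_val_zero, Matrix.cons_val_one, smul_eq_mul]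
      linarith
  have hvolW : ENNReal.ofReal (1 / 4) * volume V ≤ volume (W ∩ Ω) := by
    have := measure_mono (μ := volume) hW
    rw [Measure.addHaar_image_homothety, finrank_euclideanSpace_fin] at this
    convert this using 3
    norm_num
  have hM : 0 ≤ g !₂[1, 0] + T := add_nonneg (h.nonneg _) hT0
  have : ENNReal.ofReal (1 / 4 * c) ≤ ENNReal.ofReal (256 * (g !₂[1, 0] + T)) := by
    calc ENNReal.ofReal (1 / 4 * c) = ENNReal.ofReal (1 / 4) * ENNReal.ofReal c :=
          ENNReal.ofReal_mul (by norm_num)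
      _ ≤ ENNReal.ofReal (1 / 4) * (ENNReal.ofReal κ * volume V) := by gcongr
      _ = ENNReal.ofReal κ * (ENNReal.ofReal (1 / 4) * volume V) := by ring
      _ ≤ ENNReal.ofReal κ * volume (W ∩ Ω) := by gcongr
      _ = volume (subdiffImage g W) :=
        (h.hasMongeAmpere W (isClosed_rect _ _ _ _).measurableSet).symm
      _ ≤ _ := measure_mono (h.subdiffImage_middle_subset hcross hT)
      _ = ENNReal.ofReal (256 * (g !₂[1, 0] + T)) := by
        rw [volume_rect, ← ENNReal.ofReal_mul (by linarith)]
        ring_nf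
  rw [ENNReal.ofReal_le_ofReal_iff (by linarith)] at this
  linarith

end NormalizedSol

/-- If `g` were small at `e₁`, comparing areas of gradient images near the middle of `[0, e₁]`
would force `Ω` to contain a point `z` at a definite height above that segment, and Heinz's estimate
would apply to the triangle with vertices `0`, `e₁`, `z`. -/
theorem exists_lt_apply_of_le_off_rect {R : ℝ} (hR : 8 ≤ R) : ∃ θ : ℝ, 0 < θ ∧
    ∀ (κ : ℝ) (g : R2 → ℝ) (Ω : Set R2), NormalizedSol κ g Ω →
      (∀ x, |x 0| + |x 1| ≤ 1 → g x ≤ 2) → !₂[1, 0] ∈ Ω →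
      (∃ q, ∀ x, x ∉ rect (-R) R (-8) 8 → ⟪q, x⟫ + 1 / 4 ≤ g x) → θ < g !₂[1, 0] := by
  have : 0 < R := by linarith
  set c : ℝ := (1 / (8 * R)) ^ 2 * (1 / (512 * R))
  have hc0 : 0 < c := by positivity
  obtain ⟨θ, hθ, heinz⟩ := exists_lt_max_of_mongeAmpereGE (κ := c ^ 2 / 4096) (by positivity)
  refine ⟨min (c / 2048) θ, lt_min (by positivity) hθ, fun κ g Ω h hcross h1Ω ⟨q, hout⟩ => ?_⟩
  by_contra! hsmall
  obtain ⟨hsmall1, hsmall2⟩ := le_min_iff.1 hsmall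
  have hvol := h.ofReal_le_mul_volume_of_le_off_rect hR hout
  set V := rect (-(1 / 8)) (1 / 8) (-(1 / 8)) (1 / 8) ∩ Ω
  have hV : IsCompact V := (isCompact_rect _ _ _ _).inter_right h.isClosed
  obtain ⟨z, hzV, hz⟩ := hV.exists_isMaxOn (f := fun x : R2 => |x 1|)
    ⟨0, by norm_num [rect], h.zero_mem⟩ (by fun_prop)
  have hz8 : |z 1| ≤ 1 / 8 := abs_le.2 hzV.1.2
  have hκz := h.le_mul_of_abs_le (abs_nonneg _) hvol hz
  have hzlow := h.le_mul_apply_add hcross h1Ω (abs_nonneg _) hz8 hvol hz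
  have hdet : det2 !₂[1, 0] z = z 1 := by simp [det2]
  have hκdet : c ^ 2 / 4096 ≤ det2 !₂[1, 0] z ^ 2 * ((1 / 2) ^ 2 * κ) := by
    rw [hdet, ← sq_abs (z 1)]
    nlinarith
  have hMA := (h.const_mul one_half_pos).hasMongeAmpere.mongeAmpereGE_comp_frame h.convex h.zero_mem
    h1Ω hzV.2 (by rw [hdet, ← abs_pos]; linarith) hκdet
  refine (heinz _ ((h.convexOn.smul one_half_pos.le).comp_linearMap (frame !₂[1, 0] z))
    (fun x => mul_nonneg one_half_pos.le (h.nonneg _)) ?_ hMA).not_ge (max_le ?_ ?_)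
  · have := hcross z (by linarith [abs_le.2 hzV.1.1])
    simp [frame_apply]
    linarith
  · simp [h.map_zero, hθ.le]
  · have := h.nonneg !₂[1, 0]
    simp [frame_apply]
    linarith

/-! ### Symmetric sections and balanced slopes -/

section SymSection

variable {E : Type*} [NormedAddCommGroup E] {g : E → ℝ}

/-- Twice the even part of `g`. -/
def symSum (g : E → ℝ) (y : E) : ℝ := g y + g (-y)

lemma symSum_neg (g : E → ℝ) (y : E) : symSum g (-y) = symSum g y := by
  simp [symSum, add_comm]

/-- The section of height one, at the origin, of the even part of `g`. -/
def symSection (g : E → ℝ) : Set E := {y | symSum g y ≤ 2}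

lemma neg_mem_symSection {y : E} (hy : y ∈ symSection g) : -y ∈ symSection g := by
  rwa [symSection, mem_ofPred_eq, symSum_neg]

variable [InnerProductSpace ℝ E]

lemma map_smul_le (hg : ConvexOn ℝ univ g) (h0 : g 0 = 0) {t : ℝ} (ht : 0 ≤ t) (ht1 : t ≤ 1)
    (x : E) : g (t • x) ≤ t * g x := by
  simpa [h0] using map_smul_add_smul_le hg h0 ht le_rfl (by simpa using ht1) x 0

lemma convexOn_symSum (hg : ConvexOn ℝ univ g) : ConvexOn ℝ univ (symSum g) :=
  hg.add (hg.comp_linearMap (-LinearMap.id))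

lemma convex_symSection (hg : ConvexOn ℝ univ g) : Convex ℝ (symSection g) := by
  simpa [symSection] using (convexOn_symSum hg).convex_le 2

lemma isClosed_symSection [FiniteDimensional ℝ E] (hg : ConvexOn ℝ univ g) :
    IsClosed (symSection g) :=
  isClosed_le (convexOn_symSum hg).locallyLipschitz.continuous continuous_const

lemma symSection_mem_nhds_zero [FiniteDimensional ℝ E] (hg : ConvexOn ℝ univ g) (h0 : g 0 = 0) :
    symSection g ∈ nhds 0 := by
  have hopen : IsOpen {y | symSum g y < 2} :=
    isOpen_lt (convexOn_symSum hg).locallyLipschitz.continuous continuous_const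
  filter_upwards [hopen.mem_nhds (by simp [symSum, h0] : (0 : E) ∈ _)] with y hy using hy.le

lemma map_neg_smul_le_sum_sub (hg : ConvexOn ℝ univ g) (h0 : g 0 = 0) {ι : Type*} [Fintype ι]
    {w : ι → ℝ} {y : ι → E} (hw : ∀ j, 0 ≤ w j) (hw1 : ∑ j, w j = 1) (hwy : ∑ j, w j • y j = 0)
    (i : ι) : g (-(w i • y i)) ≤ ∑ j, w j * g (y j) - w i * g (y i) := by
  classical
  have hi := Finset.mem_univ i
  have := hg.map_add_sum_le (t := Finset.univ.erase i) (p := y) (q := 0) (fun j _ => hw j)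
    ((Finset.add_sum_erase _ w hi).trans hw1) (fun _ _ => mem_univ _) (hw i) (mem_univ _)
  rw [← Finset.add_sum_erase _ _ hi] at hwy
  rw [← Finset.add_sum_erase _ (fun j => w j * g (y j)) hi, add_sub_cancel_left]
  simpa only [eq_neg_of_add_eq_zero_right hwy, smul_zero, zero_add, h0, mul_zero,
    smul_eq_mul] using this

/-- Splitting `0` as a convex combination with a weight `w i ≥ c` bounds `g` in both directions
`± y i`: directly in one, and through the opposite barycentre in the other. -/
lemma mul_symSum_smul_le (hg : ConvexOn ℝ univ g) (h0 : g 0 = 0) {ι : Type*} [Fintype ι]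
    {w : ι → ℝ} {y : ι → E} (hw : ∀ j, 0 ≤ w j) (hw1 : ∑ j, w j = 1) (hwy : ∑ j, w j • y j = 0)
    {i : ι} {c : ℝ} (hc : 0 < c) (hci : c ≤ w i) :
    w i * symSum g (c • y i) ≤ c * ∑ j, w j * g (y j) := by
  have hwi : 0 < w i := hc.trans_le hci
  have hwi1 : w i ≤ 1 := hw1 ▸ Finset.single_le_sum (fun j _ => hw j) (Finset.mem_univ i)
  have hpos := map_smul_le hg h0 hc.le (hci.trans hwi1) (y i)
  have hneg := map_smul_le hg h0 (div_nonneg hc.le hwi.le) ((div_le_one hwi).2 hci) (-(w i • y i))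
  rw [smul_neg, smul_smul, div_mul_cancel₀ _ hwi.ne', div_mul_eq_mul_div, le_div_iff₀ hwi] at hneg
  have hbary := map_neg_smul_le_sum_sub hg h0 hw hw1 hwy i
  rw [symSum]
  nlinarith

/-- `q` is an affine separation, with margin `1/4`, between `g` and `0`: `⟪q, ·⟫ + 1/4` is below `g`
outside the eightfold dilation of the symmetric section, and `⟪q, ·⟫ - 1/4` everywhere. -/
structure IsBalancedSlope (g : E → ℝ) (q : E) : Prop where
  add_le : ∀ y, (1 / 8 : ℝ) • y ∉ symSection g → ⟪q, y⟫ + 1 / 4 ≤ g y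
  sub_le : ∀ y, ⟪q, y⟫ - 1 / 4 ≤ g y

/-- By Carathéodory's theorem a convex combination of at most four points would represent
`(0, 1/4)`; small weights contribute too little, so some weight outside the section is at least
`1/8`. -/
lemma zero_notMem_convexHull_epigraphs (hdim : Module.finrank ℝ E ≤ 2) [FiniteDimensional ℝ E]
    (hg : ConvexOn ℝ univ g) (hg0 : ∀ x, 0 ≤ g x) (h0 : g 0 = 0) :
    ((0 : E), (1 / 4 : ℝ)) ∉ convexHull ℝ
      ({x : E × ℝ | (1 / 8 : ℝ) • x.1 ∉ symSection g ∧ g x.1 < x.2} ∪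
        {x : E × ℝ | g x.1 + 1 / 2 < x.2}) := by
  intro hmem
  obtain ⟨ι, _, z, w, hz, hind, hw, hw1, hwz⟩ := eq_pos_convex_span_of_mem_convexHull hmem
  have hcard : (Fintype.card ι : ℝ) ≤ 4 := by
    have hspan : Module.finrank ℝ (vectorSpan ℝ (range z)) ≤ Module.finrank ℝ (E × ℝ) :=
      Submodule.finrank_le _
    rw [Module.finrank_prod, Module.finrank_self] at hspan
    exact_mod_cast hind.card_le_finrank_succ.trans (by lia)
  have hz' (i : ι) : (1 / 8 : ℝ) • (z i).1 ∉ symSection g ∧ g (z i).1 < (z i).2 ∨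
      g (z i).1 + 1 / 2 < (z i).2 := hz (mem_range_self i)
  have hfst : ∑ i, w i • (z i).1 = 0 := by simpa [Prod.fst_sum] using congr(($hwz).1)
  have hsnd : ∑ i, w i * (z i).2 = 1 / 4 := by simpa [Prod.snd_sum] using congr(($hwz).2)
  have hsum : ∑ i, w i * g (z i).1 ≤ 1 / 4 := by
    rw [← hsnd]
    gcongr with i
    · exact (hw i).le
    · rcases hz' i with h | h <;> linarith
  obtain ⟨i, hi, hwi⟩ : ∃ i, (1 / 8 : ℝ) • (z i).1 ∉ symSection g ∧ 1 / 8 ≤ w i := by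
    by_contra! hsmall
    have hlt (i : ι) : w i / 2 - 1 / 16 < w i * (z i).2 := by
      have := hw i
      have := hg0 (z i).1
      rcases hz' i with h | h
      · have := hsmall i h.1
        nlinarith
      · nlinarith
    have hne : (Finset.univ : Finset ι).Nonempty :=
      Finset.nonempty_of_sum_ne_zero (hw1 ▸ one_ne_zero)
    have := Finset.sum_lt_sum_of_nonempty hne fun i _ => hlt i
    rw [hsnd, Finset.sum_sub_distrib, ← Finset.sum_div, hw1, Finset.sum_const, nsmul_eq_mul,
      Finset.card_univ] at this
    linarith
  have hsym := mul_symSum_smul_le hg h0 (fun j => (hw j).le) hw1 hfst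
    (by norm_num : (0 : ℝ) < 1 / 8) hwi
  rw [symSection, mem_ofPred_eq, not_le] at hi
  nlinarith

lemma exists_isBalancedSlope (hdim : Module.finrank ℝ E ≤ 2) [FiniteDimensional ℝ E]
    (hg : ConvexOn ℝ univ g) (hg0 : ∀ x, 0 ≤ g x) (h0 : g 0 = 0) : ∃ q, IsBalancedSlope g q := by
  have hgc := hg.locallyLipschitz.continuous
  have hopen : IsOpen ({x : E × ℝ | (1 / 8 : ℝ) • x.1 ∉ symSection g ∧ g x.1 < x.2} ∪
        {x : E × ℝ | g x.1 + 1 / 2 < x.2}) := by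
    have hout : IsOpen {x : E × ℝ | (1 / 8 : ℝ) • x.1 ∉ symSection g} :=
      ((isClosed_symSection hg).preimage (by fun_prop :
        Continuous fun x : E × ℝ => (1 / 8 : ℝ) • x.1)).isOpen_compl
    have hlt : IsOpen {x : E × ℝ | g x.1 < x.2} :=
      isOpen_lt (hgc.comp continuous_fst) continuous_snd
    have hlt' : IsOpen {x : E × ℝ | g x.1 + 1 / 2 < x.2} :=
      isOpen_lt ((hgc.comp continuous_fst).add continuous_const) continuous_snd
    exact (hout.inter hlt).union hlt'
  obtain ⟨q, hq⟩ := exists_affine_lt_of_notMem (x := 0) (s := 1 / 4) (t := 1)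
    (convex_convexHull ℝ _) hopen.convexHull (zero_notMem_convexHull_epigraphs hdim hg hg0 h0)
    (subset_convexHull ℝ _ (Or.inr (by simp [h0]; norm_num))) (by norm_num)
  simp only [sub_zero] at hq
  refine ⟨q, fun y hy => ?_, fun y => ?_⟩ <;> refine le_of_forall_pos_le_add fun ε hε => ?_
  · linarith [hq y (g y + ε) (subset_convexHull ℝ _ (Or.inl ⟨hy, by simp [hε]⟩))]
  · linarith [hq y (g y + 1 / 2 + ε) (subset_convexHull ℝ _ (Or.inr (by simp [hε])))]

lemma exists_abs_inner_le_one_lt [CompleteSpace E] {s : Set E} (hs : Convex ℝ s)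
    (hsc : IsClosed s) (hneg : ∀ y ∈ s, -y ∈ s) (h0 : (0 : E) ∈ s) {x : E} (hx : x ∉ s) :
    ∃ ξ : E, (∀ y ∈ s, |⟪ξ, y⟫| ≤ 1) ∧ 1 < ⟪ξ, x⟫ := by
  obtain ⟨φ, c, hφ, hc⟩ := geometric_hahn_banach_closed_point hs hsc hx
  have hc0 : 0 < c := by simpa using hφ 0 h0
  obtain ⟨v, rfl⟩ := (InnerProductSpace.toDual ℝ E).surjective φ
  simp only [InnerProductSpace.toDual_apply_apply] at hφ hc
  have hle (y : E) (hy : y ∈ s) : ⟪c⁻¹ • v, y⟫ ≤ 1 := by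
    rw [real_inner_smul_left, inv_mul_le_one₀ hc0]
    exact (hφ y hy).le
  refine ⟨c⁻¹ • v, fun y hy => abs_le.2 ⟨?_, hle y hy⟩, ?_⟩
  · have := hle (-y) (hneg y hy)
    rw [inner_neg_right] at this
    linarith
  · rwa [real_inner_smul_left, lt_inv_mul_iff₀ hc0, mul_one]

/-- Adding to a balanced slope a small slope that separates `2 • w` from the symmetric section. -/
lemma IsBalancedSlope.exists_tilted [FiniteDimensional ℝ E] (hg : ConvexOn ℝ univ g)
    (hg0 : ∀ x, 0 ≤ g x) (h0 : g 0 = 0) {q w : E} (hq : IsBalancedSlope g q) (hqw : 0 ≤ ⟪q, w⟫)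
    (hw : (2 : ℝ) • w ∉ symSection g) :
    ∃ B : E, 1 / 128 ≤ ⟪B, w⟫ ∧ (∀ y ∈ symSection g, |⟪B, y⟫| ≤ 3) ∧
      ∀ y, (1 / 8 : ℝ) • y ∉ symSection g → ⟪B, y⟫ ≤ g y := by
  obtain ⟨ξ, hξ, hξw⟩ := exists_abs_inner_le_one_lt (convex_symSection hg) (isClosed_symSection hg)
    (fun _ => neg_mem_symSection) (mem_of_mem_nhds (symSection_mem_nhds_zero hg h0)) hw
  rw [inner_smul_right] at hξw
  have hB (y : E) : ⟪q + (1 / 64 : ℝ) • ξ, y⟫ = ⟪q, y⟫ + 1 / 64 * ⟪ξ, y⟫ := by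
    rw [inner_add_left, real_inner_smul_left]
  have hle (y : E) (hy : y ∈ symSection g) : ⟪q, y⟫ + 1 / 64 * ⟪ξ, y⟫ ≤ 3 := by
    have hsum : g y + g (-y) ≤ 2 := hy
    linarith [hq.sub_le y, (abs_le.1 (hξ y hy)).2, hg0 (-y)]
  refine ⟨q + (1 / 64 : ℝ) • ξ, ?_, fun y hy => ?_, fun y hy => ?_⟩ <;> rw [hB]
  · linarith
  · have := hle (-y) (neg_mem_symSection hy)
    rw [inner_neg_right, inner_neg_right] at this
    exact abs_le.2 ⟨by linarith, hle y hy⟩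
  rcases le_or_gt ⟪ξ, y⟫ 16 with hξy | hξy
  · linarith [hq.add_le y hy]
  have hpos : 0 < ⟪ξ, y⟫ := by linarith
  set t := 16 / ⟪ξ, y⟫
  have ht0 : 0 < t := by positivity
  have htξ : t * ⟪ξ, y⟫ = 16 := div_mul_cancel₀ _ hpos.ne'
  have hout : (1 / 8 : ℝ) • t • y ∉ symSection g := fun hmem => by
    have := (abs_le.1 (hξ _ hmem)).2
    rw [inner_smul_right, inner_smul_right, htξ] at this
    norm_num at this
  have hadd := hq.add_le _ hout
  have hsmul := map_smul_le hg h0 ht0.le ((div_le_one hpos).2 hξy.le) y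
  rw [inner_smul_right] at hadd
  refine le_of_mul_le_mul_left ?_ ht0
  linarith

end SymSection

/-! ### Decay of symmetric sections -/

lemma HasMongeAmpere.exists_mem_lt {κ : ℝ} {f : R2 → ℝ} {Ω D : Set R2} (h : HasMongeAmpere κ f Ω)
    (hf : ConvexOn ℝ univ f) (hD : IsCompact D) {z q : R2} {c : ℝ} (hc : 0 < c)
    (hout : ∀ y ∉ D, f z + ⟪q, y - z⟫ + c ≤ f y) :
    ∃ x ∈ D ∩ Ω, f x < f z + ⟪q, x - z⟫ + c := by
  obtain ⟨N, hN, hDN⟩ := hD.isBounded.subset_ball_lt 0 z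
  set S := D ∩ {x | f x < f z + ⟪q, x - z⟫ + c}
  have hS : MeasurableSet S := hD.measurableSet.inter
    (isOpen_lt hf.locallyLipschitz.continuous (by fun_prop)).measurableSet
  have hball : ball q (c / N) ⊆ subdiffImage f S := by
    intro p hp
    obtain ⟨x, hxD, hx, hxp⟩ := exists_subgradAt_of_affine_le_off_compact hf hD hc hout
      (p := p) fun y hy => calc
        ⟪p - q, y - z⟫ ≤ ‖p - q‖ * ‖y - z‖ := real_inner_le_norm _ _
        _ ≤ ‖p - q‖ * N := by gcongr; exact (mem_ball_iff_norm.1 (hDN hy)).le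
        _ < c := (lt_div_iff₀ hN).1 (mem_ball_iff_norm.1 hp)
    exact mem_subdiffImage.2 ⟨x, ⟨hxD, hx⟩, hxp⟩
  by_contra! hne
  have hempty : S ∩ Ω = ∅ :=
    eq_empty_of_forall_notMem fun x hx => (hne x ⟨hx.1.1, hx.2⟩).not_gt hx.1.2
  have hnull := h S hS
  rw [hempty, measure_empty, mul_zero] at hnull
  exact (measure_ball_pos volume q (div_pos hc hN)).ne' (measure_mono_null hball hnull)

namespace NormalizedSol

variable {κ θ : ℝ} {g : R2 → ℝ} {Ω : Set R2} {w : R2}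

lemma exists_mem_add_lt (h : NormalizedSol κ g Ω) (hbdd : Bornology.IsBounded (symSection g))
    (hθ : 0 < θ) {B : R2} (hgw : g w ≤ 2 * θ) (hBw : 6 * θ ≤ ⟪B, w⟫)
    (hB : ∀ y, (1 / 8 : ℝ) • y ∉ symSection g → ⟪B, y⟫ ≤ g y) :
    ∃ x ∈ Ω, (1 / 8 : ℝ) • x ∈ symSection g ∧ g x + 3 * θ < 6 * θ / ⟪B, w⟫ * ⟪B, x⟫ := by
  have hBw0 : 0 < ⟪B, w⟫ := by linarith
  set τ := 6 * θ / ⟪B, w⟫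
  have hτ0 : 0 < τ := by positivity
  have hτ1 : τ ≤ 1 := (div_le_one hBw0).2 hBw
  have hτw : τ * ⟪B, w⟫ = 6 * θ := div_mul_cancel₀ _ hBw0.ne'
  have hD : IsCompact {y : R2 | (1 / 8 : ℝ) • y ∈ symSection g} :=
    (Homeomorph.smulOfNeZero (1 / 8 : ℝ) (by norm_num)).isClosedEmbedding.isCompact_preimage
      (isCompact_of_isClosed_isBounded (isClosed_symSection h.convexOn) hbdd)
  obtain ⟨x, ⟨hxD, hxΩ⟩, hx⟩ := h.hasMongeAmpere.exists_mem_lt h.convexOn hD (z := w) (q := τ • B)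
    (c := 3 * θ - g w) (by linarith) fun y hy => by
      rw [real_inner_smul_left, inner_sub_right]
      rcases le_total 0 ⟪B, y⟫ with hs | hs
      · nlinarith [hB y hy]
      · nlinarith [h.nonneg y]
  rw [real_inner_smul_left, inner_sub_right] at hx
  exact ⟨x, hxΩ, hxD, by linarith⟩

lemma exists_flat_point (h : NormalizedSol κ g Ω) (hbdd : Bornology.IsBounded (symSection g))
    (hθ : 0 < θ) (hθ' : θ ≤ 1 / 768) (hw : symSum g w ≤ 2 * θ)
    (hw2 : (2 : ℝ) • w ∉ symSection g) :
    ∃ a ∈ Ω, a ∈ symSection g ∧ g a ≤ θ ∧ ∀ t : ℝ, t • a ∈ symSection g → |t| ≤ 6144 := by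
  obtain ⟨q, hq⟩ := exists_isBalancedSlope (by simp) h.convexOn h.nonneg h.map_zero
  wlog hqw : 0 ≤ ⟪q, w⟫ generalizing w
  · refine this (w := -w) (by rwa [symSum_neg]) (fun hmem => hw2 ?_) ?_
    · simpa using neg_mem_symSection hmem
    · rw [inner_neg_right]
      linarith
  obtain ⟨B, hBw, hB3, hB⟩ := hq.exists_tilted h.convexOn h.nonneg h.map_zero hqw hw2
  have hgw : g w ≤ 2 * θ := le_trans (le_add_of_nonneg_right (h.nonneg (-w))) hw
  obtain ⟨x, hxΩ, hx, hlt⟩ := h.exists_mem_add_lt hbdd hθ hgw (by linarith) hB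
  have hBw0 : 0 < ⟪B, w⟫ := by linarith
  rw [div_mul_eq_mul_div, lt_div_iff₀ hBw0] at hlt
  have hgx := h.nonneg x
  have hBx : ⟪B, w⟫ < 2 * ⟪B, x⟫ := by nlinarith
  have hBx0 : 0 < 2 * ⟪B, x⟫ := hBw0.trans hBx
  set t := ⟪B, w⟫ / (2 * ⟪B, x⟫)
  have ht0 : 0 < t := div_pos hBw0 hBx0
  have ht1 : t ≤ 1 := (div_le_one hBx0).2 hBx.le
  have htx : t * (2 * ⟪B, x⟫) = ⟪B, w⟫ := div_mul_cancel₀ _ hBx0.ne'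
  refine ⟨t • (1 / 8 : ℝ) • x, ?_, ?_, ?_, fun s hs => ?_⟩
  · rw [smul_smul]
    exact h.convex.smul_mem_of_zero_mem h.zero_mem hxΩ ⟨by positivity, by linarith⟩
  · exact (convex_symSection h.convexOn).smul_mem_of_zero_mem
      (mem_of_mem_nhds (symSection_mem_nhds_zero h.convexOn h.map_zero)) hx ⟨ht0.le, ht1⟩
  · have hga := map_smul_le h.convexOn h.map_zero (t := t * (1 / 8)) (by positivity)
      (by linarith) x
    have htg : t * g x * ⟪B, w⟫ < 3 * θ * ⟪B, w⟫ := calc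
      t * g x * ⟪B, w⟫ ≤ t * ((g x + 3 * θ) * ⟪B, w⟫) := by
        rw [mul_assoc]
        gcongr
        linarith
      _ < t * (6 * θ * ⟪B, x⟫) := by gcongr
      _ = 3 * θ * ⟪B, w⟫ := by linear_combination 3 * θ * htx
    rw [smul_smul]
    linarith [lt_of_mul_lt_mul_right htg hBw0.le]
  · have hBs := hB3 _ hs
    rw [inner_smul_right, inner_smul_right, inner_smul_right, abs_mul,
      show t * (1 / 8 * ⟪B, x⟫) = ⟪B, w⟫ / 16 by linarith,
      abs_of_pos (by positivity : 0 < ⟪B, w⟫ / 16)] at hBs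
    nlinarith [abs_nonneg s]

end NormalizedSol

lemma exists_det2_ne_zero_forall_le {T : Set R2} (hT : IsCompact T) (hT0 : T ∈ nhds 0) {a : R2}
    (ha : a ≠ 0) : ∃ b ∈ T, det2 a b ≠ 0 ∧ ∀ y ∈ T, |det2 a y| ≤ |det2 a b| := by
  obtain ⟨b, hbT, hb⟩ := hT.exists_isMaxOn (f := fun y => |det2 a y|) ⟨0, mem_of_mem_nhds hT0⟩
    (by unfold det2; fun_prop)
  refine ⟨b, hbT, fun hab => ha ?_, fun y hy => hb hy⟩
  have hcont : Continuous fun ε : ℝ => ε • (!₂[-a 1, a 0] : R2) := by fun_prop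
  have htend := (hcont.tendsto' 0 0 (zero_smul ℝ _)).mono_left (nhdsWithin_le_nhds (s := Ioi 0))
  obtain ⟨ε, hε, hε0⟩ := ((htend.eventually hT0).and self_mem_nhdsWithin).exists
  have hle : |det2 a (ε • !₂[-a 1, a 0])| ≤ |det2 a b| := hb hε
  have hdet : det2 a (ε • !₂[-a 1, a 0]) = ε * ‖a‖ ^ 2 := by
    rw [R2.norm_sq_eq]
    simp [det2]
    ring
  rw [hab, abs_zero, abs_nonpos_iff, hdet] at hle
  have hne : ε ≠ 0 := hε0.ne'
  simpa [hne] using hle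

/-- The determinant bounds the coordinate along `b`; removing that component by symmetry and
convexity leaves a multiple of `a` in `T`. -/
lemma mem_rect_of_smul_frame_mem {T : Set R2} (hT : Convex ℝ T) (hneg : ∀ y ∈ T, -y ∈ T)
    {a b : R2} {L : ℝ} (hbT : b ∈ T) (hab : det2 a b ≠ 0) (hb : ∀ y ∈ T, |det2 a y| ≤ |det2 a b|)
    (ha : ∀ t : ℝ, t • a ∈ T → |t| ≤ L) {x : R2} (hx : (1 / 8 : ℝ) • frame a b x ∈ T) :
    x ∈ rect (-(16 * L)) (16 * L) (-8) 8 := by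
  have hdet := hb _ hx
  rw [frame_apply, show det2 a ((1 / 8 : ℝ) • (x 0 • a + x 1 • b)) = x 1 / 8 * det2 a b by
    simp [det2]; ring, abs_mul, mul_le_iff_le_one_left (abs_pos.2 hab)] at hdet
  have hx1 := abs_le.1 hdet
  have hxb : (-(x 1 / 8)) • b ∈ T := by
    convert hT hbT (hneg b hbT) (a := (1 - x 1 / 8) / 2) (b := (1 + x 1 / 8) / 2) (by linarith)
      (by linarith) (by ring) using 1
    module
  have hxa : (x 0 / 16) • a ∈ T := by
    convert hT hx hxb (a := 1 / 2) (b := 1 / 2) (by norm_num) (by norm_num) (by norm_num) using 1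
    rw [frame_apply]
    module
  have hx0 := abs_le.1 (ha _ hxa)
  exact ⟨⟨by linarith, by linarith⟩, by linarith, by linarith⟩

lemma frame_mem_of_abs_add_abs_le {T : Set R2} (hT : Convex ℝ T) (hneg : ∀ y ∈ T, -y ∈ T)
    (h0 : 0 ∈ T) {a b x : R2} (ha : a ∈ T) (hb : b ∈ T) (hx : |x 0| + |x 1| ≤ 1) :
    frame a b x ∈ T := by
  have hsign (s : ℝ) {c : R2} (hc : c ∈ T) : ∃ d ∈ T, s • c = |s| • d := by
    rcases le_total 0 s with hs | hs
    · exact ⟨c, hc, by rw [abs_of_nonneg hs]⟩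
    · exact ⟨-c, hneg c hc, by rw [abs_of_nonpos hs, neg_smul_neg]⟩
  obtain ⟨a', ha', hxa⟩ := hsign (x 0) ha
  obtain ⟨b', hb', hxb⟩ := hsign (x 1) hb
  rw [frame_apply, hxa, hxb]
  exact smul_add_smul_mem hT h0 (abs_nonneg _) (abs_nonneg _) hx ha' hb'

theorem exists_two_smul_mem_symSection : ∃ θ : ℝ, 0 < θ ∧ θ ≤ 1 / 4 ∧
    ∀ (κ : ℝ) (g : R2 → ℝ) (Ω : Set R2) (w : R2), NormalizedSol κ g Ω →
      Bornology.IsBounded (symSection g) → symSum g w ≤ 2 * θ → (2 : ℝ) • w ∈ symSection g := by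
  obtain ⟨θ₀, hθ₀, hlt⟩ := exists_lt_apply_of_le_off_rect (R := 16 * 6144) (by norm_num)
  refine ⟨min θ₀ (1 / 768), lt_min hθ₀ (by norm_num), (min_le_right _ _).trans (by norm_num), ?_⟩
  intro κ g Ω w h hbdd hw
  by_contra hw2
  obtain ⟨a, haΩ, haT, hga, ha⟩ :=
    h.exists_flat_point hbdd (lt_min hθ₀ (by norm_num)) (min_le_right _ _) hw hw2
  have hT := convex_symSection h.convexOn
  have hT0 := symSection_mem_nhds_zero h.convexOn h.map_zero
  have hneg : ∀ y ∈ symSection g, -y ∈ symSection g := fun _ => neg_mem_symSection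
  have ha0 : a ≠ 0 := by
    rintro rfl
    have := ha 6145 (by simpa using mem_of_mem_nhds hT0)
    norm_num at this
  obtain ⟨b, hbT, hab, hb⟩ := exists_det2_ne_zero_forall_le
    (isCompact_of_isClosed_isBounded (isClosed_symSection h.convexOn) hbdd) hT0 ha0
  obtain ⟨q, hq⟩ := exists_isBalancedSlope (by simp) h.convexOn h.nonneg h.map_zero
  have hframe : frame a b !₂[1, 0] = a := by simp [frame_apply]
  have hga' : θ₀ < g (frame a b !₂[1, 0]) := by
    refine hlt _ _ _ (h.comp_linearMap (frame a b) (by rwa [det_frame])) (fun x hx => ?_)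
      (by rwa [mem_preimage, hframe]) ⟨(frame a b).adjoint q, fun x hx => ?_⟩
    · have hmem : g (frame a b x) + g (-frame a b x) ≤ 2 :=
        frame_mem_of_abs_add_abs_le hT hneg (mem_of_mem_nhds hT0) haT hbT hx
      linarith [h.nonneg (-frame a b x)]
    · rw [LinearMap.adjoint_inner_left]
      exact hq.add_le _ fun hmem => hx (mem_rect_of_smul_frame_mem hT hneg hbT hab hb ha hmem)
  rw [hframe] at hga'
  linarith [min_le_left θ₀ (1 / 768)]

/-! ### Strict convexity of second differences -/

/-- The symmetric second difference of `f` at `m` in the direction `w`. -/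
def secDiff (f : R2 → ℝ) (m w : R2) : ℝ := f (m + w) + f (m - w) - 2 * f m

lemma symSum_add_sub_affine (f : R2 → ℝ) (m q y : R2) :
    symSum (fun x => f (m + x) - ⟪q, x⟫ - f m) y = secDiff f m y := by
  simp only [symSum, secDiff, inner_neg_right, ← sub_eq_add_neg]
  ring

theorem exists_secDiff_two_smul_le : ∃ θ : ℝ, 0 < θ ∧ θ ≤ 1 / 4 ∧
    ∀ (f : R2 → ℝ) (Ω : Set R2) (m w : R2) (h : ℝ), ConvexOn ℝ univ f → Convex ℝ Ω →
      AlexandrovSol f Ω → m ∈ closure Ω → 0 < h →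
      Bornology.IsBounded {y | secDiff f m y ≤ 2 * h} → secDiff f m w ≤ 2 * (θ * h) →
      secDiff f m ((2 : ℝ) • w) ≤ 2 * h := by
  obtain ⟨θ, hθ0, hθ1, hdecay⟩ := exists_two_smul_mem_symSection
  refine ⟨θ, hθ0, hθ1, fun f Ω m w h hf hΩ hA hm hh hbdd hw => ?_⟩
  obtain ⟨q, hq⟩ := exists_subgradAt hf m
  set g := fun x => h⁻¹ * (f (m + x) - ⟪q, x⟫ - f m)
  have hsym (y : R2) (c : ℝ) : symSum g y ≤ 2 * c ↔ secDiff f m y ≤ 2 * (c * h) := by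
    have hsmul : symSum g y = h⁻¹ * symSum (fun x => f (m + x) - ⟪q, x⟫ - f m) y :=
      (mul_add _ _ _).symm
    rw [hsmul, symSum_add_sub_affine, inv_mul_le_iff₀ hh, mul_comm h, mul_assoc]
  have hmem (y : R2) : y ∈ symSection g ↔ secDiff f m y ≤ 2 * h := by
    simpa [symSection] using hsym y 1
  rw [← hmem]
  refine hdecay _ g _ w ((hA.normalizedSol hf hΩ hm hq).const_mul (inv_pos.2 hh)) ?_
    ((hsym w θ).2 hw)
  rwa [show symSection g = {y | secDiff f m y ≤ 2 * h} from Set.ext hmem]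

lemma norm_le_mul_half_pow_of_doubling {E : Type*} [NormedAddCommGroup E] [NormedSpace ℝ E]
    {F : E → ℝ} {θ R : ℝ} (hbase : ∀ y, F y ≤ 2 → ‖y‖ ≤ R)
    (hstep : ∀ (k : ℕ) (w : E), Bornology.IsBounded {y | F y ≤ 2 * θ ^ k} →
      F w ≤ 2 * (θ * θ ^ k) → F ((2 : ℝ) • w) ≤ 2 * θ ^ k) (k : ℕ) :
    ∀ y, F y ≤ 2 * θ ^ k → ‖y‖ ≤ R * (1 / 2) ^ k := by
  induction k with
  | zero => simpa using hbase
  | succ k ih =>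
    intro y hy
    have hnorm := ih _ (hstep k y (isBounded_iff_forall_norm_le.2 ⟨_, ih⟩) (by rwa [← pow_succ']))
    rw [norm_smul, Real.norm_ofNat] at hnorm
    rw [pow_succ]
    linarith

theorem exists_rpow_le_secDiff : ∃ θ β : ℝ, 0 < θ ∧ 2 ≤ β ∧
    ∀ (f : R2 → ℝ) (Ω : Set R2) (m : R2) (R : ℝ), ConvexOn ℝ univ f → Convex ℝ Ω →
      AlexandrovSol f Ω → m ∈ closure Ω → 0 < R → (∀ y, secDiff f m y ≤ 2 → ‖y‖ ≤ R) →
      ∀ w, w ≠ 0 → ‖w‖ ≤ R → 2 * θ * (‖w‖ / R) ^ β ≤ secDiff f m w := by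
  obtain ⟨θ, hθ0, hθ1, hdecay⟩ := exists_secDiff_two_smul_le
  set β := Real.logb (1 / 2) θ with hβ
  have hθβ : (1 / 2 : ℝ) ^ β = θ := Real.rpow_logb (by norm_num) (by norm_num) hθ0
  have hβ2 : 2 ≤ β := by
    rw [hβ, Real.le_logb_iff_rpow_le_of_base_lt_one (by norm_num) (by norm_num) hθ0]
    norm_num
    linarith
  refine ⟨θ, β, hθ0, hβ2, fun f Ω m R hf hΩ hA hm hR hbdd w hw hwR => ?_⟩
  have hpow := norm_le_mul_half_pow_of_doubling hbdd fun k w =>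
    hdecay f Ω m w (θ ^ k) hf hΩ hA hm (by positivity)
  have hx0 : 0 < ‖w‖ / R := div_pos (norm_pos_iff.2 hw) hR
  obtain ⟨n, hn1, hn2⟩ := exists_nat_pow_near_of_lt_one hx0 ((div_le_one hR).2 hwR)
    (by norm_num : (0 : ℝ) < 1 / 2) (by norm_num)
  have hlow : 2 * θ ^ (n + 1) ≤ secDiff f m w := by
    by_contra! hlt
    rw [lt_div_iff₀' hR] at hn1
    exact hn1.not_ge (hpow (n + 1) w hlt.le)
  calc 2 * θ * (‖w‖ / R) ^ β ≤ 2 * θ * ((1 / 2) ^ n) ^ β := by gcongr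
    _ = 2 * θ ^ (n + 1) := by
      rw [← Real.rpow_pow_comm (by norm_num), hθβ]
      ring
    _ ≤ secDiff f m w := hlow

/-! ### Differentiability and attained slopes -/

lemma SubgradAt.eq_gradient {f : R2 → ℝ} {x p : R2} (hp : SubgradAt f x p)
    (hd : DifferentiableAt ℝ f x) : p = gradient f x := by
  have hmin : IsLocalMin (fun y => f y - ⟪p, y⟫) x := Filter.Eventually.of_forall fun y => by
    have := hp y
    rw [inner_sub_right] at this
    linarith
  have hzero := hmin.hasFDerivAt_eq_zero
    (hd.hasGradientAt.hasFDerivAt.sub (InnerProductSpace.toDual ℝ R2 p).hasFDerivAt)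
  exact ((InnerProductSpace.toDual ℝ R2).injective (sub_eq_zero.1 hzero)).symm

lemma subgradAt_gradient {f : R2 → ℝ} (hf : ConvexOn ℝ univ f) {x : R2}
    (hd : DifferentiableAt ℝ f x) : SubgradAt f x (gradient f x) := by
  obtain ⟨p, hp⟩ := exists_subgradAt hf x
  rwa [← hp.eq_gradient hd]

lemma volume_not_differentiableAt_eq_zero {f : R2 → ℝ} (hf : LocallyLipschitz f) :
    volume {x | ¬ DifferentiableAt ℝ f x} = 0 := by
  refine measure_null_of_locally_null _ fun x _ => ?_
  obtain ⟨K, t, ht, hK⟩ := hf x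
  refine ⟨{x | ¬ DifferentiableAt ℝ f x} ∩ interior t,
    Filter.inter_mem self_mem_nhdsWithin (mem_nhdsWithin_of_mem_nhds (interior_mem_nhds.2 ht)),
    measure_mono_null ?_ (ae_iff.1 (hK.ae_differentiableWithinAt_of_mem (μ := volume)))⟩
  intro y hy hdiff
  exact hy.1 ((hdiff (interior_subset hy.2)).differentiableAt (mem_interior_iff_mem_nhds.1 hy.2))

lemma AlexandrovSol.volume_subdiffImage_diff {f : R2 → ℝ} {Ω Ω' : Set R2}
    (hA : AlexandrovSol f Ω) (hf : ConvexOn ℝ univ f) (hΩ : Convex ℝ Ω)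
    (hmap : MapsTo (gradient f) Ω Ω') : volume (subdiffImage f univ \ Ω') = 0 := by
  set E := {x | ¬ DifferentiableAt ℝ f x} ∪ (interior Ω)ᶜ
  have hE : MeasurableSet E :=
    (measurableSet_of_differentiableAt ℝ f).compl.union isOpen_interior.measurableSet.compl
  have hE0 : volume (E ∩ Ω) = 0 := by
    refine measure_mono_null (t := {x | ¬ DifferentiableAt ℝ f x} ∪ frontier Ω) ?_
      (measure_union_null (volume_not_differentiableAt_eq_zero hf.locallyLipschitz)
        (hΩ.addHaar_frontier volume))
    rintro x ⟨hx | hx, hxΩ⟩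
    · exact Or.inl hx
    · exact Or.inr ⟨subset_closure hxΩ, hx⟩
  refine measure_mono_null ?_ ((hA E hE).trans hE0)
  rintro p ⟨hp, hp'⟩
  obtain ⟨x, -, hx⟩ := mem_subdiffImage.1 hp
  refine mem_subdiffImage.2 ⟨x, ?_, hx⟩
  by_contra hxE
  obtain ⟨hd, hi⟩ := not_or.1 hxE
  exact hp' (hx.eq_gradient (not_not.1 hd) ▸ hmap (interior_subset (not_not.1 hi)))

/-- `f` minus the linear function of slope `p` grows at least at the linear rate `ε`. -/
def HasLinearGrowth (p : R2) (ε C : ℝ) (f : R2 → ℝ) : Prop :=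
  ∀ z, ⟪p, z⟫ + ε * ‖z‖ - C ≤ f z

namespace HasLinearGrowth

variable {f : R2 → ℝ} {p q x : R2} {ε C t : ℝ}

lemma of_slope_near (h : HasLinearGrowth p ε C f) (q : R2) :
    HasLinearGrowth q (ε - ‖q - p‖) C f := fun z => by
  have := real_inner_le_norm (q - p) z
  rw [inner_sub_left] at this
  linarith [h z]

lemma mix (h : HasLinearGrowth p ε C f) (hq : SubgradAt f x q) (ht : t ∈ Icc (0 : ℝ) 1) :
    HasLinearGrowth (t • p + (1 - t) • q) (t * ε) (t * C + (1 - t) * (⟪q, x⟫ - f x)) f :=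
  fun z => by
  have hpz := mul_le_mul_of_nonneg_left (h z) ht.1
  have hqz := mul_le_mul_of_nonneg_left (hq z) (sub_nonneg.2 ht.2)
  rw [inner_sub_right] at hqz
  rw [inner_add_left, real_inner_smul_left, real_inner_smul_left]
  linarith

lemma exists_subgradAt (h : HasLinearGrowth p ε C f) (hf : Continuous f) (hq : ‖q - p‖ < ε) :
    ∃ x, SubgradAt f x q := by
  have htend : Filter.Tendsto (fun z => f z - ⟪q, z⟫) (Filter.cocompact R2) Filter.atTop := by
    refine Filter.tendsto_atTop_mono (fun z => ?_) (Filter.tendsto_atTop_add_const_right _ (-C)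
      (tendsto_norm_cocompact_atTop.const_mul_atTop (sub_pos.2 hq)))
    linarith [h.of_slope_near q z]
  obtain ⟨x, hx⟩ := (by fun_prop : Continuous fun z => f z - ⟪q, z⟫).exists_forall_le htend
  refine ⟨x, fun y => ?_⟩
  rw [inner_sub_right]
  linarith [hx y]

end HasLinearGrowth

/-- The Legendre transform of `f` is convex, hence locally bounded, on the ball. -/
lemma exists_hasLinearGrowth_of_subgradAt {f : R2 → ℝ} {p : R2} {ρ : ℝ} (hρ : 0 < ρ)
    (h : ∀ y ∈ ball p ρ, ∃ x, SubgradAt f x y) : ∃ ε C, 0 < ε ∧ HasLinearGrowth p ε C f := by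
  choose! x hx using h
  set φ := fun y => ⟪y, x y⟫ - f (x y)
  have hle (y : R2) (hy : y ∈ ball p ρ) (z : R2) : ⟪y, z⟫ - f z ≤ φ y := by
    have := hx y hy z
    rw [inner_sub_right] at this
    linarith
  have hφ : ConvexOn ℝ (ball p ρ) φ := by
    refine ⟨convex_ball p ρ, fun y hy z hz a b ha hb hab => ?_⟩
    have hya := mul_le_mul_of_nonneg_left (hle y hy (x (a • y + b • z))) ha
    have hzb := mul_le_mul_of_nonneg_left (hle z hz (x (a • y + b • z))) hb
    simp only [φ, inner_add_left, real_inner_smul_left, smul_eq_mul] at hya hzb ⊢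
    linear_combination hya + hzb + f (x (a • y + b • z)) * hab
  have hsub : closedBall p (ρ / 2) ⊆ ball p ρ := closedBall_subset_ball (by linarith)
  obtain ⟨C, hC⟩ := (isCompact_closedBall p (ρ / 2)).bddAbove_image
    ((hφ.continuousOn isOpen_ball).mono hsub)
  refine ⟨ρ / 2, C, by positivity, fun z => ?_⟩
  have hy : p + (ρ / 2 / ‖z‖) • z ∈ closedBall p (ρ / 2) := by
    rw [mem_closedBall, dist_self_add_left, norm_smul, Real.norm_of_nonneg (by positivity)]
    calc ρ / 2 / ‖z‖ * ‖z‖ = ρ / 2 * (‖z‖ / ‖z‖) := by ring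
      _ ≤ ρ / 2 := mul_le_of_le_one_right (by positivity) (div_self_le_one _)
  have hz := (hle _ (hsub hy) z).trans (hC (mem_image_of_mem φ hy))
  calc ⟪p, z⟫ + ρ / 2 * ‖z‖ - C = ⟪p + (ρ / 2 / ‖z‖) • z, z⟫ - C := by
        rw [inner_add_left, real_inner_smul_left, real_inner_self_eq_norm_mul_norm,
          mul_comm_div (ρ / 2), mul_self_div_self]
    _ ≤ f z := by linarith

lemma AlexandrovSol.mem_closure_of_subgradAt {f : R2 → ℝ} {Ω Ω' : Set R2}
    (hA : AlexandrovSol f Ω) (hf : ConvexOn ℝ univ f) (hΩ : Convex ℝ Ω)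
    (hmap : MapsTo (gradient f) Ω Ω') (hatt : ∀ y ∈ Ω', ∃ x, SubgradAt f x y)
    (hne : (interior Ω').Nonempty) {x p : R2} (hp : SubgradAt f x p) : p ∈ closure Ω' := by
  by_contra hpc
  obtain ⟨y₀, hy₀⟩ := hne
  obtain ⟨ρ, hρ, hball⟩ := Metric.isOpen_iff.1 isOpen_interior y₀ hy₀
  obtain ⟨ε, C, hε, hgrow⟩ := exists_hasLinearGrowth_of_subgradAt hρ
    fun y hy => hatt y (interior_subset (hball hy))
  have htend : Filter.Tendsto (fun t : ℝ => t • y₀ + (1 - t) • p) (nhdsWithin 0 (Ioi 0))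
      (nhds p) :=
    ((by fun_prop : Continuous fun t : ℝ => t • y₀ + (1 - t) • p).tendsto' 0 p
      (by simp)).mono_left nhdsWithin_le_nhds
  obtain ⟨t, ht, ht0, ht1⟩ := ((htend.eventually
    (isClosed_closure.isOpen_compl.mem_nhds hpc)).and (Ioo_mem_nhdsGT one_pos)).exists
  have hpos : 0 < volume (ball (t • y₀ + (1 - t) • p) (t * ε) ∩ (closure Ω')ᶜ) :=
    (isOpen_ball.inter isClosed_closure.isOpen_compl).measure_pos _
      ⟨_, mem_ball_self (by positivity), ht⟩
  refine hpos.ne' (measure_mono_null ?_ (hA.volume_subdiffImage_diff hf hΩ hmap))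
  rintro y ⟨hy, hyΩ⟩
  obtain ⟨z, hz⟩ := (hgrow.mix hp ⟨ht0.le, ht1.le⟩).exists_subgradAt
    hf.locallyLipschitz.continuous (mem_ball_iff_norm.1 hy)
  exact ⟨mem_subdiffImage.2 ⟨z, mem_univ _, hz⟩, fun h => hyΩ (subset_closure h)⟩

/-! ### Linear growth from a centred section -/

/-- The centred section of `w` of height one at the origin is comparable to the unit disk. -/
def HasUnitSection (δ : ℝ) (w : R2 → ℝ) : Prop :=
  ∃ S z, IsCentredSection w 0 1 S ∧ closedBall z δ ⊆ S ∧ S ⊆ closedBall 0 δ⁻¹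

section InnerProductSpace

variable {E : Type*} [NormedAddCommGroup E] [InnerProductSpace ℝ E]

lemma mul_norm_le_inner_add_of_closedBall {p z : E} {δ c : ℝ} (hδ : 0 ≤ δ)
    (h : ∀ x ∈ closedBall z δ, 0 ≤ ⟪p, x⟫ + c) : δ * ‖p‖ ≤ ⟪p, z⟫ + c := by
  have hmem : z - (δ / ‖p‖) • p ∈ closedBall z δ := by
    rw [mem_closedBall, dist_self_sub_left, norm_smul, Real.norm_of_nonneg (by positivity)]
    calc δ / ‖p‖ * ‖p‖ = δ * (‖p‖ / ‖p‖) := by ring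
      _ ≤ δ := mul_le_of_le_one_right hδ (div_self_le_one _)
  have hle := h _ hmem
  rw [inner_sub_right, inner_smul_right, real_inner_self_eq_norm_mul_norm, mul_comm_div,
    mul_self_div_self] at hle
  linarith

/-- The affine function `⟪p, ·⟫ + 1` has integral `μ S` over `S`, and is at least `δ ‖p‖ / 2` on the
ball of radius `δ / 2`. -/
lemma norm_mul_measureReal_ball_le [MeasurableSpace E] [BorelSpace E] [FiniteDimensional ℝ E]
    {μ : Measure E} [μ.IsAddHaarMeasure] {S : Set E} (hS : MeasurableSet S)
    (hSb : Bornology.IsBounded S) (hcentre : ∫ x in S, x ∂μ = 0) {p z : E} {δ : ℝ} (hδ : 0 ≤ δ)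
    (hp : ∀ x ∈ S, 0 ≤ ⟪p, x⟫ + 1) (hz : closedBall z δ ⊆ S) :
    δ / 2 * ‖p‖ * μ.real (ball 0 (δ / 2)) ≤ μ.real S := by
  have hid : IntegrableOn (fun x : E => x) S μ :=
    (continuous_id.continuousOn.integrableOn_compact hSb.isCompact_closure).mono_set subset_closure
  have hconst : IntegrableOn (fun _ : E => (1 : ℝ)) S μ := integrableOn_const hSb.measure_lt_top.ne
  have haff : IntegrableOn (fun x : E => ⟪p, x⟫ + 1) S μ := (hid.const_inner p).add hconst
  have hsub : ball z (δ / 2) ⊆ S :=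
    (ball_subset_closedBall.trans (closedBall_subset_closedBall (by linarith))).trans hz
  have hcen := mul_norm_le_inner_add_of_closedBall hδ fun x hx => hp x (hz hx)
  calc δ / 2 * ‖p‖ * μ.real (ball 0 (δ / 2)) = ∫ x in ball z (δ / 2), δ / 2 * ‖p‖ ∂μ := by
        rw [setIntegral_const, smul_eq_mul, mul_comm, ← Measure.addHaar_real_ball_center μ z]
    _ ≤ ∫ x in ball z (δ / 2), (⟪p, x⟫ + 1) ∂μ := by
        refine setIntegral_mono_on (integrableOn_const measure_ball_lt_top.ne)
          (haff.mono_set hsub) measurableSet_ball fun x hx => ?_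
        have hinner := neg_le_of_abs_le (abs_real_inner_le_norm p (x - z))
        rw [inner_sub_right] at hinner
        nlinarith [norm_nonneg p, mem_ball_iff_norm.1 hx]
    _ ≤ ∫ x in S, (⟪p, x⟫ + 1) ∂μ :=
        setIntegral_mono_set haff (ae_restrict_of_forall_mem hS hp)
          (Filter.Eventually.of_forall hsub)
    _ = μ.real S := by
        rw [integral_add (hid.const_inner p) hconst, integral_inner hid, hcentre]
        simp

end InnerProductSpace

lemma hasLinearGrowth_of_sphere {w : R2 → ℝ} (hw : ConvexOn ℝ univ w) (hw0 : ∀ x, 0 ≤ w x)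
    (h0 : w 0 = 0) {p : R2} {r : ℝ} (hr : 0 < r) (h : ∀ x, ‖x‖ = r → ⟪p, x⟫ + 1 ≤ w x) :
    HasLinearGrowth p r⁻¹ (‖p‖ * r + 1) w := fun x => by
  rcases le_or_gt ‖x‖ r with hx | hx
  · have hinner := (real_inner_le_norm p x).trans (mul_le_mul_of_nonneg_left hx (norm_nonneg p))
    linarith [hw0 x, inv_mul_le_one_of_le₀ hx hr.le]
  · have hx0 : 0 < ‖x‖ := hr.trans hx
    set t := r / ‖x‖ with ht
    have ht0 : 0 < t := by positivity
    have hnorm : ‖t • x‖ = r := by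
      rw [norm_smul, Real.norm_of_nonneg ht0.le, div_mul_cancel₀ _ hx0.ne']
    have hsphere := (h _ hnorm).trans
      (map_smul_le hw h0 ht0.le ((div_le_one hx0).2 hx.le) x)
    have hgrow : ⟪p, x⟫ + t⁻¹ ≤ w x := by
      refine le_of_mul_le_mul_left ?_ ht0
      rwa [mul_add, mul_inv_cancel₀ ht0.ne', ← inner_smul_right]
    rw [ht, inv_div, div_eq_inv_mul] at hgrow
    linarith [mul_nonneg (norm_nonneg p) hr.le]

theorem exists_hasLinearGrowth_of_hasUnitSection {δ : ℝ} (hδ : 0 < δ) :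
    ∃ ε C : ℝ, 0 < ε ∧ 0 < C ∧ ∀ w : R2 → ℝ, ConvexOn ℝ univ w → (∀ x, 0 ≤ w x) → w 0 = 0 →
      HasUnitSection δ w → ∃ p, ‖p‖ ≤ C ∧ HasLinearGrowth p ε C w := by
  set V := volume.real (ball (0 : R2) (δ / 2))
  have hV : 0 < V :=
    ENNReal.toReal_pos (measure_ball_pos volume 0 (by positivity)).ne' measure_ball_lt_top.ne
  set P := volume.real (closedBall (0 : R2) δ⁻¹) / (δ / 2 * V)
  have hr : 0 < 2 * δ⁻¹ := by positivity
  have hP : 0 ≤ P := by positivity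
  refine ⟨(2 * δ⁻¹)⁻¹, P + P * (2 * δ⁻¹) + 1, by positivity, by positivity, ?_⟩
  rintro w hw hw0 h0 ⟨S, z, ⟨p, rfl, hcentre⟩, hin, hout⟩
  simp only [h0, sub_zero, zero_add] at hcentre hin hout
  have hS : IsOpen {x | w x < ⟪p, x⟫ + 1} :=
    isOpen_lt hw.locallyLipschitz.continuous (by fun_prop)
  have hpP : ‖p‖ ≤ P := by
    have hle := norm_mul_measureReal_ball_le hS.measurableSet (isBounded_closedBall.subset hout)
      hcentre hδ.le (fun x hx => (hw0 x).trans (le_of_lt hx)) hin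
    have hup := measureReal_mono hout (isBounded_closedBall.measure_lt_top (μ := volume)).ne
    rw [le_div_iff₀ (by positivity)]
    linarith
  have hgrow : HasLinearGrowth p (2 * δ⁻¹)⁻¹ (‖p‖ * (2 * δ⁻¹) + 1) w := by
    refine hasLinearGrowth_of_sphere hw hw0 h0 hr fun x hx => not_lt.1 fun hlt => ?_
    have := mem_closedBall_zero_iff.1 (hout hlt)
    linarith [inv_pos.2 hδ]
  have hPr : ‖p‖ * (2 * δ⁻¹) ≤ P * (2 * δ⁻¹) := by gcongr
  exact ⟨p, by linarith [mul_nonneg hP hr.le], fun x => by linarith [hgrow x]⟩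

/-! ### Dual potentials -/

/-- `w` is a normalized convex potential transporting `Ω` to `Ω'`. The equation
`∇w(Ω) = Ω'` uses Mathlib's `gradient`, which is `0` where `w` is not differentiable. -/
structure IsPotential (w : R2 → ℝ) (Ω Ω' : Set R2) : Prop where
  convexOn : ConvexOn ℝ univ w
  convex : Convex ℝ Ω
  nonempty_interior : (interior Ω').Nonempty
  image_gradient : gradient w '' Ω = Ω'
  alexandrovSol : AlexandrovSol w Ω
  map_zero : w 0 = 0
  subgradAt_zero : SubgradAt w 0 0

/-- Two normalized potentials between `Ω₁` and `Ω₂`, in opposite directions, the second one being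
the Legendre transform of the first one on `Ω₂`. -/
structure IsPotentialPair (u v : R2 → ℝ) (Ω₁ Ω₂ : Set R2) : Prop where
  left : IsPotential u Ω₁ Ω₂
  right : IsPotential v Ω₂ Ω₁
  eq_legendre : ∀ y ∈ Ω₂, v y = ⨆ x, (⟪x, y⟫ - u x)

/-- The closure of `Ω` contains all slopes of `u`, the Legendre transform of `u` is `v` there, and
`v` is an Alexandrov solution with support `Ω`. Unlike `IsPotentialPair`, this makes no use of
gradients, so that junk values no longer occur. -/
structure IsDualPair (u v : R2 → ℝ) (Ω : Set R2) : Prop where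
  convexOn_left : ConvexOn ℝ univ u
  nonneg_left : ∀ x, 0 ≤ u x
  map_zero_left : u 0 = 0
  convexOn_right : ConvexOn ℝ univ v
  nonneg_right : ∀ p, 0 ≤ v p
  convex : Convex ℝ Ω
  alexandrovSol : AlexandrovSol v Ω
  mem_closure_of_subgradAt : ∀ {x p}, SubgradAt u x p → p ∈ closure Ω
  inner_le_add : ∀ p ∈ closure Ω, ∀ x, ⟪x, p⟫ ≤ u x + v p
  eq_inner_sub : ∀ {x p}, SubgradAt u x p → v p = ⟪x, p⟫ - u x

lemma SubgradAt.inner_sub_le {f : R2 → ℝ} {x p : R2} (h : SubgradAt f x p) (z : R2) :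
    ⟪z, p⟫ - f z ≤ ⟪x, p⟫ - f x := by
  have := h z
  rw [inner_sub_right, real_inner_comm z, real_inner_comm x] at this
  linarith

lemma SubgradAt.ciSup_inner_sub_eq {f : R2 → ℝ} {x p : R2} (h : SubgradAt f x p) :
    ⨆ z, (⟪z, p⟫ - f z) = ⟪x, p⟫ - f x :=
  le_antisymm (ciSup_le h.inner_sub_le) (le_ciSup (f := fun z => ⟪z, p⟫ - f z)
    ⟨_, forall_mem_range.2 h.inner_sub_le⟩ x)

lemma inner_le_add_of_mem_closure {E : Type*} [NormedAddCommGroup E] [InnerProductSpace ℝ E]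
    {f g : E → ℝ} {Ω : Set E} (hg : Continuous g) (h : ∀ p ∈ Ω, ∀ x, ⟪x, p⟫ ≤ f x + g p) {p : E}
    (hp : p ∈ closure Ω) (x : E) : ⟪x, p⟫ ≤ f x + g p :=
  closure_minimal (fun p hp => h p hp x) (isClosed_le (f := fun p => ⟪x, p⟫)
    (g := fun p => f x + g p) (by fun_prop) (by fun_prop)) hp

namespace IsPotential

variable {w : R2 → ℝ} {Ω Ω' : Set R2}

lemma nonneg (h : IsPotential w Ω Ω') (x : R2) : 0 ≤ w x := by
  simpa [h.map_zero] using h.subgradAt_zero x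

lemma exists_subgradAt (h : IsPotential w Ω Ω') {y : R2} (hy : y ∈ Ω') :
    ∃ x, (x ∈ Ω ∨ y = 0) ∧ SubgradAt w x y := by
  rw [← h.image_gradient] at hy
  obtain ⟨x, hx, rfl⟩ := hy
  by_cases hd : DifferentiableAt ℝ w x
  · exact ⟨x, Or.inl hx, subgradAt_gradient h.convexOn hd⟩
  · rw [gradient_eq_zero_of_not_differentiableAt hd]
    exact ⟨0, Or.inr rfl, h.subgradAt_zero⟩

lemma mem_closure_of_subgradAt (h : IsPotential w Ω Ω') {x p : R2} (hp : SubgradAt w x p) :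
    p ∈ closure Ω' :=
  h.alexandrovSol.mem_closure_of_subgradAt h.convexOn h.convex
    (mapsTo_iff_image_subset.2 h.image_gradient.subset)
    (fun _ hy => (h.exists_subgradAt hy).imp fun _ => And.right) h.nonempty_interior hp

end IsPotential

namespace IsPotentialPair

variable {u v : R2 → ℝ} {Ω₁ Ω₂ : Set R2}

lemma inner_le_add_right (h : IsPotentialPair u v Ω₁ Ω₂) {p : R2} (hp : p ∈ closure Ω₂) (x : R2) :
    ⟪x, p⟫ ≤ u x + v p := by
  refine inner_le_add_of_mem_closure h.right.convexOn.locallyLipschitz.continuous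
    (fun y hy x => ?_) hp x
  obtain ⟨x₁, -, hx₁⟩ := h.left.exists_subgradAt hy
  rw [h.eq_legendre y hy, hx₁.ciSup_inner_sub_eq]
  linarith [hx₁.inner_sub_le x]

lemma inner_le_add_left (h : IsPotentialPair u v Ω₁ Ω₂) {x : R2} (hx : x ∈ closure Ω₁) (p : R2) :
    ⟪p, x⟫ ≤ v p + u x := by
  refine inner_le_add_of_mem_closure h.left.convexOn.locallyLipschitz.continuous
    (fun x hx p => ?_) hx p
  obtain ⟨p', hp' | rfl, hxp⟩ := h.right.exists_subgradAt hx
  · have hyoung := h.inner_le_add_right (subset_closure hp') x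
    rw [real_inner_comm] at hyoung
    linarith [hxp.inner_sub_le p]
  · simpa using add_nonneg (h.right.nonneg p) (h.left.nonneg 0)

/-- Along the segment from `p` to an interior point of `Ω₂` the Legendre formula holds. -/
lemma le_inner_sub_of_subgradAt (h : IsPotentialPair u v Ω₁ Ω₂) {x p : R2} (hp : SubgradAt u x p) :
    v p ≤ ⟪x, p⟫ - u x := by
  obtain ⟨y, hy⟩ := h.left.nonempty_interior
  have hcont : Continuous fun t : ℝ => v (t • y + (1 - t) • p) := by
    have := h.right.convexOn.locallyLipschitz.continuous
    fun_prop
  have hbound : Continuous fun t : ℝ => t * v y + (1 - t) * (⟪x, p⟫ - u x) := by fun_prop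
  have hleft := (hcont.tendsto' 0 (v p) (by simp)).mono_left (nhdsWithin_le_nhds (s := Ioi 0))
  have hright := (hbound.tendsto' 0 (⟪x, p⟫ - u x) (by simp)).mono_left
    (nhdsWithin_le_nhds (s := Ioi 0))
  refine le_of_tendsto_of_tendsto hleft hright ?_
  filter_upwards [Ioo_mem_nhdsGT one_pos] with t ht
  have hmem : t • y + (1 - t) • p ∈ Ω₂ := interior_subset
    (h.right.convex.combo_interior_closure_mem_interior hy (h.left.mem_closure_of_subgradAt hp)
      ht.1 (sub_nonneg.2 ht.2.le) (by ring))
  rw [h.eq_legendre _ hmem]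
  refine ciSup_le fun z => ?_
  have hyoung := mul_le_mul_of_nonneg_left
    (h.inner_le_add_right (subset_closure (interior_subset hy)) z) ht.1.le
  have hslope := mul_le_mul_of_nonneg_left (hp.inner_sub_le z) (sub_nonneg.2 ht.2.le)
  rw [inner_add_right, inner_smul_right, inner_smul_right]
  linarith

lemma eq_inner_sub_right (h : IsPotentialPair u v Ω₁ Ω₂) {x p : R2} (hp : SubgradAt u x p) :
    v p = ⟪x, p⟫ - u x := by
  have hyoung := h.inner_le_add_right (h.left.mem_closure_of_subgradAt hp) x
  linarith [h.le_inner_sub_of_subgradAt hp]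

lemma eq_inner_sub_left (h : IsPotentialPair u v Ω₁ Ω₂) {x p : R2} (hx : SubgradAt v p x) :
    u x = ⟪p, x⟫ - v p := by
  obtain ⟨y, hy⟩ := exists_subgradAt h.left.convexOn x
  have heq := h.eq_inner_sub_right hy
  have hyoung := h.inner_le_add_left (h.right.mem_closure_of_subgradAt hx) p
  have hle := hx.inner_sub_le y
  rw [real_inner_comm] at heq
  linarith

lemma isDualPair (h : IsPotentialPair u v Ω₁ Ω₂) : IsDualPair u v Ω₂ where
  convexOn_left := h.left.convexOn
  nonneg_left := h.left.nonneg
  map_zero_left := h.left.map_zero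
  convexOn_right := h.right.convexOn
  nonneg_right := h.right.nonneg
  convex := h.right.convex
  alexandrovSol := h.right.alexandrovSol
  mem_closure_of_subgradAt := h.left.mem_closure_of_subgradAt
  inner_le_add _ hp := h.inner_le_add_right hp
  eq_inner_sub := h.eq_inner_sub_right

lemma isDualPair_swap (h : IsPotentialPair u v Ω₁ Ω₂) : IsDualPair v u Ω₁ where
  convexOn_left := h.right.convexOn
  nonneg_left := h.right.nonneg
  map_zero_left := h.right.map_zero
  convexOn_right := h.left.convexOn
  nonneg_right := h.left.nonneg
  convex := h.left.convex
  alexandrovSol := h.left.alexandrovSol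
  mem_closure_of_subgradAt := h.right.mem_closure_of_subgradAt
  inner_le_add _ hx := h.inner_le_add_left hx
  eq_inner_sub := h.eq_inner_sub_left

end IsPotentialPair

/-! ### Local bounds for the subgradients -/

theorem exists_mul_lt_max_of_triangle {κ : ℝ} (hκ : 0 < κ) : ∃ θ : ℝ, 0 < θ ∧
    ∀ (f : R2 → ℝ) (Ω : Set R2) (p a b : R2) (H : ℝ), ConvexOn ℝ univ f → (∀ x, 0 ≤ f x) →
      Convex ℝ Ω → AlexandrovSol f Ω → p ∈ closure Ω → p + a ∈ closure Ω → p + b ∈ closure Ω →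
      0 < H → f (p + b) ≤ H → κ * H ≤ |det2 a b| → θ * H < max (f p) (f (p + a)) := by
  obtain ⟨θ, hθ, hheinz⟩ := exists_lt_max_of_mongeAmpereGE (pow_pos hκ 2)
  refine ⟨θ, hθ, fun f Ω p a b H hf hf0 hΩ hA hp ha hb hH hfb hdet => ?_⟩
  have hs : 0 < H⁻¹ := inv_pos.2 hH
  have hab : det2 a b ≠ 0 := abs_pos.1 ((mul_pos hκ hH).trans_le hdet)
  have he₁ : frame a b !₂[1, 0] = a := by simp [frame_apply]
  have he₂ : frame a b !₂[0, 1] = b := by simp [frame_apply]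
  have hκdet : κ ^ 2 ≤ det2 a b ^ 2 * (H⁻¹ ^ 2 * 1) := by
    rw [mul_one, ← mul_pow, sq_le_sq, abs_mul, abs_of_pos hκ, abs_of_pos hs, ← div_eq_mul_inv,
      le_div_iff₀ hH]
    exact hdet
  have hMA := ((hA.hasMongeAmpere_closure hΩ).comp_add_sub_affine p 0 0).const_mul hs
  simp only [inner_zero_left, sub_zero] at hMA
  have hmain := hheinz (fun x => H⁻¹ * f (p + frame a b x))
    (((hf.translate_right p).comp_linearMap (frame a b)).smul hs.le)
    (fun x => mul_nonneg hs.le (hf0 _)) (by rwa [he₂, inv_mul_le_one₀ hH])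
    (hMA.mongeAmpereGE_comp_frame (hΩ.closure.translate_preimage_right p) (by simpa using hp) ha
      hb hab hκdet)
  rwa [he₁, _root_.map_zero, add_zero, ← mul_max_of_nonneg _ _ hs.le, lt_inv_mul_iff₀ hH,
    mul_comm] at hmain

lemma exists_norm_eq_abs_det2_eq {d : R2} (hd : d ≠ 0) {r : ℝ} (hr : 0 ≤ r) :
    ∃ a : R2, ‖a‖ = r ∧ |det2 a d| = r * ‖d‖ := by
  have hd0 : 0 < ‖d‖ := norm_pos_iff.2 hd
  have hnorm : ‖(!₂[-d 1, d 0] : R2)‖ = ‖d‖ := by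
    rw [← sq_eq_sq₀ (norm_nonneg _) (norm_nonneg _), R2.norm_sq_eq, R2.norm_sq_eq]
    simp [add_comm]
  refine ⟨(r / ‖d‖) • !₂[-d 1, d 0], ?_, ?_⟩
  · rw [norm_smul, hnorm, Real.norm_of_nonneg (by positivity), div_mul_cancel₀ _ hd0.ne']
  · have hdet : det2 ((r / ‖d‖) • !₂[-d 1, d 0]) d = -(r / ‖d‖ * ‖d‖ ^ 2) := by
      rw [R2.norm_sq_eq]
      simp [det2]
      ring
    rw [hdet, abs_neg, abs_of_nonneg (by positivity)]
    field_simp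

namespace IsDualPair

variable {u v : R2 → ℝ} {Ω : Set R2} {ε C : ℝ} {p y x x' p' : R2}

lemma mem_closure_and_le_of_hasLinearGrowth (h : IsDualPair u v Ω) (hu : HasLinearGrowth p ε C u)
    (hy : ‖y - p‖ < ε) : y ∈ closure Ω ∧ v y ≤ C := by
  obtain ⟨x, hx⟩ := hu.exists_subgradAt h.convexOn_left.locallyLipschitz.continuous hy
  refine ⟨h.mem_closure_of_subgradAt hx, ?_⟩
  rw [h.eq_inner_sub hx, real_inner_comm]
  linarith [hu.of_slope_near y x, mul_nonneg (sub_nonneg.2 hy.le) (norm_nonneg x)]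

lemma le_norm_mul_norm (h : IsDualPair u v Ω) (hp : SubgradAt u x p) : v p ≤ ‖x‖ * ‖p‖ := by
  rw [h.eq_inner_sub hp]
  linarith [real_inner_le_norm x p, h.nonneg_left x]

end IsDualPair

/-- Heinz's estimate is applied to `v` on the triangle with vertices `p`, `p + a` and `y`, where
`a ⟂ y - p`: as `v ≤ C` near `p` and `v y ≤ R ‖y‖`, it bounds `R ‖y‖` by a multiple of `C`. -/
theorem exists_norm_subgrad_le {ε C R : ℝ} (hε : 0 < ε) (hC : 0 < C) (hR : 0 < R) :
    ∃ Y : ℝ, 0 < Y ∧ ∀ (u v : R2 → ℝ) (Ω : Set R2) (p : R2), IsDualPair u v Ω → ‖p‖ ≤ C →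
      HasLinearGrowth p ε C u → ∀ x y, ‖x‖ ≤ R → SubgradAt u x y → ‖y‖ ≤ Y := by
  obtain ⟨θ, hθ, hheinz⟩ := exists_mul_lt_max_of_triangle (κ := ε / (4 * R)) (by positivity)
  refine ⟨max (2 * C) (C / (θ * R)), by positivity, fun u v Ω p h hpC hu x y hx hy => ?_⟩
  by_contra! hlt
  obtain ⟨hlt₁, hlt₂⟩ := max_lt_iff.1 hlt
  have hy0 : 0 < ‖y‖ := by linarith
  have hdist : ‖y‖ / 2 ≤ ‖y - p‖ := by linarith [norm_sub_norm_le y p]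
  obtain ⟨a, ha, hdet⟩ :=
    exists_norm_eq_abs_det2_eq (norm_pos_iff.1 ((half_pos hy0).trans_le hdist)) (half_pos hε).le
  obtain ⟨hp, hvp⟩ := h.mem_closure_and_le_of_hasLinearGrowth hu (y := p) (by simpa using hε)
  obtain ⟨hpa, hva⟩ := h.mem_closure_and_le_of_hasLinearGrowth hu (y := p + a)
    (by rw [add_sub_cancel_left, ha]; exact half_lt_self hε)
  have hpy : p + (y - p) = y := add_sub_cancel p y
  have hvy : v (p + (y - p)) ≤ R * ‖y‖ := by
    rw [hpy]
    exact (h.le_norm_mul_norm hy).trans (by gcongr)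
  have hmain := hheinz v Ω p a (y - p) (R * ‖y‖) h.convexOn_right h.nonneg_right h.convex
    h.alexandrovSol hp hpa (by rw [hpy]; exact h.mem_closure_of_subgradAt hy) (by positivity) hvy
    (calc ε / (4 * R) * (R * ‖y‖) = ε / 2 * (‖y‖ / 2) := by field_simp; norm_num
      _ ≤ ε / 2 * ‖y - p‖ := by gcongr
      _ = |det2 a (y - p)| := hdet.symm)
  rw [div_lt_iff₀ (by positivity)] at hlt₂
  linarith [max_le hvp hva]

/-! ### Hölder continuity of the gradient -/

lemma HasLinearGrowth.mul_norm_le_secDiff {f : R2 → ℝ} {q : R2} {ε C : ℝ}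
    (h : HasLinearGrowth q ε C f) (hε : 0 ≤ ε) (m y : R2) :
    ε * ‖y‖ ≤ secDiff f m y / 2 + f m - ⟪q, m⟫ + C := by
  have hplus := h (m + y)
  have hminus := h (m - y)
  rw [inner_add_right] at hplus
  rw [inner_sub_right] at hminus
  have htri : 2 * ‖y‖ ≤ ‖m + y‖ + ‖m - y‖ := by
    have := norm_sub_le (m + y) (m - y)
    rwa [add_sub_sub_cancel, ← two_smul ℝ y, norm_smul, Real.norm_two] at this
  rw [secDiff]
  linarith [mul_le_mul_of_nonneg_left htri hε]

/-- At the midpoint of two slopes of `u` the Fenchel inequality is used twice, with equality at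
the slopes themselves. -/
lemma IsDualPair.secDiff_midpoint_le {u v : R2 → ℝ} {Ω : Set R2} (h : IsDualPair u v Ω)
    {x x' p p' : R2} (hp : SubgradAt u x p) (hp' : SubgradAt u x' p') :
    secDiff v (midpoint ℝ p p') ((1 / 2 : ℝ) • (p - p')) ≤
      ‖x - x'‖ * ‖(1 / 2 : ℝ) • (p - p')‖ := by
  set m := midpoint ℝ p p' with hm
  set w := (1 / 2 : ℝ) • (p - p') with hw
  have hmw : p = m + w := by rw [hm, hw, midpoint_eq_smul_add, invOf_eq_inv]; module
  have hmw' : p' = m - w := by rw [hm, hw, midpoint_eq_smul_add, invOf_eq_inv]; module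
  have hmΩ : m ∈ closure Ω := h.convex.closure.midpoint_mem (h.mem_closure_of_subgradAt hp)
    (h.mem_closure_of_subgradAt hp')
  have heq := h.eq_inner_sub hp
  have heq' := h.eq_inner_sub hp'
  rw [hmw, inner_add_right] at heq
  rw [hmw', inner_sub_right] at heq'
  have hinner := real_inner_le_norm (x - x') w
  rw [inner_sub_left] at hinner
  rw [secDiff]
  linarith [h.inner_le_add m hmΩ x, h.inner_le_add m hmΩ x']

lemma le_mul_rpow_inv_of_mul_rpow_le {a R θ β t : ℝ} (ha : 0 < a) (hR : 0 < R) (hθ : 0 < θ)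
    (hβ : 1 < β) (ht : 0 ≤ t) (h : 2 * θ * (a / R) ^ β ≤ t * a) :
    a ≤ (R ^ β / (2 * θ)) ^ (β - 1)⁻¹ * t ^ (β - 1)⁻¹ := by
  have hβ' : 0 < β - 1 := sub_pos.2 hβ
  rw [← Real.mul_rpow (by positivity) ht, Real.le_rpow_inv_iff_of_pos ha.le (by positivity) hβ',
    div_mul_eq_mul_div, le_div_iff₀ (by positivity)]
  rw [Real.div_rpow ha.le hR.le, mul_div_assoc', div_le_iff₀ (by positivity)] at h
  have hsplit : a ^ β = a ^ (β - 1) * a := by rw [← Real.rpow_add_one ha.ne', sub_add_cancel]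
  rw [hsplit] at h
  exact le_of_mul_le_mul_right (by linarith) ha

theorem exists_norm_subgrad_sub_le : ∃ δ₀ : ℝ, 0 < δ₀ ∧ ∀ ε C R Y : ℝ, 0 < ε → 0 < C → 0 < R →
    0 < Y → ∃ M : ℝ, 0 < M ∧ ∀ (u v : R2 → ℝ) (Ω : Set R2) (q : R2), IsDualPair u v Ω →
      ‖q‖ ≤ C → HasLinearGrowth q ε C v → ∀ x x' p p', ‖x‖ ≤ R → ‖x'‖ ≤ R → ‖p‖ ≤ Y → ‖p'‖ ≤ Y →
        SubgradAt u x p → SubgradAt u x' p' → ‖p - p'‖ ≤ M * ‖x - x'‖ ^ δ₀ := by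
  obtain ⟨θ, β, hθ, hβ, hlow⟩ := exists_rpow_le_secDiff
  refine ⟨(β - 1)⁻¹, inv_pos.2 (by linarith), fun ε C R Y hε hC hR hY => ?_⟩
  set R₀ := (1 + R * Y + C * Y + C) / ε + Y
  have hR₀ : 0 < R₀ := by positivity
  refine ⟨2 * (R₀ ^ β / (2 * θ)) ^ (β - 1)⁻¹, by positivity, ?_⟩
  intro u v Ω q h hq hv x x' p p' hx hx' hpY hpY' hp hp'
  rcases eq_or_ne p p' with rfl | hne
  · rw [sub_self, norm_zero]
    positivity
  set m := midpoint ℝ p p'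
  set w := (1 / 2 : ℝ) • (p - p') with hw
  have hpw : ‖p - p'‖ = 2 * ‖w‖ := by
    rw [hw, norm_smul, Real.norm_of_nonneg (by norm_num)]
    ring
  have hw0 : w ≠ 0 := smul_ne_zero (by norm_num) (sub_ne_zero.2 hne)
  have hmY : ‖m‖ ≤ Y := by
    simpa using (convex_closedBall (0 : R2) Y).midpoint_mem (by simpa using hpY)
      (by simpa using hpY')
  have hvm : v m ≤ R * Y := ((h.convexOn_right.convex_le (R * Y)).midpoint_mem
    ⟨mem_univ p, (h.le_norm_mul_norm hp).trans (by gcongr)⟩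
    ⟨mem_univ p', (h.le_norm_mul_norm hp').trans (by gcongr)⟩).2
  have hsec (y : R2) (hy : secDiff v m y ≤ 2) : ‖y‖ ≤ R₀ := by
    have hinner := neg_le_of_abs_le (abs_real_inner_le_norm q m)
    have hqm : ‖q‖ * ‖m‖ ≤ C * Y := by gcongr
    refine le_trans ?_ (le_add_of_nonneg_right hY.le)
    rw [le_div_iff₀' hε]
    linarith [hv.mul_norm_le_secDiff hε.le m y]
  have hwR : ‖w‖ ≤ R₀ := by
    refine le_trans ?_ (le_add_of_nonneg_left (by positivity))
    linarith [norm_sub_le p p']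
  have hmΩ : m ∈ closure Ω := h.convex.closure.midpoint_mem (h.mem_closure_of_subgradAt hp)
    (h.mem_closure_of_subgradAt hp')
  have hsecw := (hlow v Ω m R₀ h.convexOn_right h.convex h.alexandrovSol hmΩ hR₀ hsec w hw0
    hwR).trans (h.secDiff_midpoint_le hp hp')
  rw [hpw, mul_assoc]
  gcongr
  exact le_mul_rpow_inv_of_mul_rpow_le (norm_pos_iff.2 hw0) hR₀ hθ (by linarith) (norm_nonneg _)
    hsecw

lemma tendsto_mul_norm_sub_rpow {E : Type*} [SeminormedAddCommGroup E] {δ : ℝ} (hδ : 0 < δ)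
    (M : ℝ) (x : E) : Filter.Tendsto (fun y => M * ‖y - x‖ ^ δ) (nhds x) (nhds 0) := by
  have hcont : Continuous fun y => M * ‖y - x‖ ^ δ :=
    continuous_const.mul ((by fun_prop : Continuous fun y => ‖y - x‖).rpow_const
      fun _ => Or.inr hδ.le)
  exact hcont.tendsto' x 0 (by simp [Real.zero_rpow hδ.ne'])

lemma SubgradAt.hasGradientAt {f : R2 → ℝ} (hf : ConvexOn ℝ univ f) {x p : R2} {ω : R2 → ℝ}
    (hp : SubgradAt f x p) (hω : Filter.Tendsto ω (nhds x) (nhds 0))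
    (h : ∀ᶠ y in nhds x, ∀ q, SubgradAt f y q → ‖q - p‖ ≤ ω y) : HasGradientAt f p x := by
  rw [hasGradientAt_iff_isLittleO, Asymptotics.isLittleO_iff]
  intro c hc
  filter_upwards [hω.eventually_le_const hc, h] with y hyc hy
  obtain ⟨q, hq⟩ := exists_subgradAt hf y
  have hinner := (real_inner_le_norm (q - p) (y - x)).trans
    (mul_le_mul_of_nonneg_right ((hy q hq).trans hyc) (norm_nonneg _))
  have hqx := hq x
  rw [← neg_sub y x, inner_neg_right] at hqx
  rw [inner_sub_left] at hinner
  rw [Real.norm_of_nonneg (by linarith [hp y])]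
  linarith

/-- `w` is of class `C^{1,α}` on `K` in the sense of differentiability at the points of `K`, and
`w`, its gradient and the `α`-Hölder seminorm of the gradient are bounded there by `C`. -/
def HolderC1On (K : Set R2) (α C : ℝ) (w : R2 → ℝ) : Prop :=
  (∀ x ∈ K, DifferentiableAt ℝ w x) ∧ ContinuousOn (fun x => gradient w x) K ∧
    (∀ x ∈ K, |w x| ≤ C) ∧ (∀ x ∈ K, ‖gradient w x‖ ≤ C) ∧
    (∀ x ∈ K, ∀ y ∈ K, ‖gradient w x - gradient w y‖ ≤ C * ‖x - y‖ ^ α)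

lemma holderC1On_of_subgrad {w : R2 → ℝ} (hw : ConvexOn ℝ univ w) (hw0 : ∀ x, 0 ≤ w x)
    (h0 : w 0 = 0) {K : Set R2} {R α Y M C : ℝ} (hα : 0 < α) (hK : ∀ x ∈ K, ‖x‖ < R)
    (hY : ∀ x p, ‖x‖ ≤ R → SubgradAt w x p → ‖p‖ ≤ Y)
    (hM : ∀ x x' p p', ‖x‖ ≤ R → ‖x'‖ ≤ R → SubgradAt w x p → SubgradAt w x' p' →
      ‖p - p'‖ ≤ M * ‖x - x'‖ ^ α)
    (hYC : Y ≤ C) (hYR : Y * R ≤ C) (hMC : M ≤ C) : HolderC1On K α C w := by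
  have hdiff (x : R2) (hx : x ∈ K) : DifferentiableAt ℝ w x := by
    obtain ⟨p, hp⟩ := exists_subgradAt hw x
    refine (hp.hasGradientAt hw (tendsto_mul_norm_sub_rpow hα M x) ?_).differentiableAt
    filter_upwards [(isOpen_lt continuous_norm continuous_const).mem_nhds (hK x hx)] with y hy q hq
    exact hM y x q p (le_of_lt hy) (hK x hx).le hq hp
  have hsub (x : R2) (hx : x ∈ K) : SubgradAt w x (gradient w x) :=
    subgradAt_gradient hw (hdiff x hx)
  have hbound (x : R2) (hx : x ∈ K) : ‖gradient w x‖ ≤ Y := hY x _ (hK x hx).le (hsub x hx)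
  have hholder (x : R2) (hx : x ∈ K) (y : R2) (hy : y ∈ K) :
      ‖gradient w x - gradient w y‖ ≤ C * ‖x - y‖ ^ α :=
    (hM x y _ _ (hK x hx).le (hK y hy).le (hsub x hx) (hsub y hy)).trans (by gcongr)
  refine ⟨hdiff, fun x hx => ?_, fun x hx => ?_, fun x hx => (hbound x hx).trans hYC, hholder⟩
  · rw [ContinuousWithinAt, tendsto_iff_norm_sub_tendsto_zero]
    refine squeeze_zero' (Filter.Eventually.of_forall fun _ => norm_nonneg _) ?_
      ((tendsto_mul_norm_sub_rpow hα C x).mono_left nhdsWithin_le_nhds)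
    filter_upwards [self_mem_nhdsWithin] with y hy using hholder y hy x hx
  · rw [abs_of_nonneg (hw0 x)]
    have hx0 := (hsub x hx).inner_sub_le 0
    rw [inner_zero_left, h0, sub_zero, sub_nonneg] at hx0
    calc w x ≤ ⟪x, gradient w x⟫ := hx0
      _ ≤ ‖gradient w x‖ * ‖x‖ := (real_inner_le_norm _ _).trans_eq (mul_comm _ _)
      _ ≤ Y * R := mul_le_mul (hbound x hx) (hK x hx).le (norm_nonneg _)
        ((norm_nonneg _).trans (hbound x hx))
      _ ≤ C := hYR

theorem exists_holderC1On_of_isDualPair : ∃ δ₀ : ℝ, 0 < δ₀ ∧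
    ∀ (ε C : ℝ) (K : Set R2), 0 < ε → 0 < C → IsCompact K → ∃ M : ℝ, 0 < M ∧
      ∀ (u v : R2 → ℝ) (Ω : Set R2) (p q : R2), IsDualPair u v Ω →
        ‖p‖ ≤ C → HasLinearGrowth p ε C u → ‖q‖ ≤ C → HasLinearGrowth q ε C v →
        HolderC1On K δ₀ M u := by
  obtain ⟨δ₀, hδ₀, hholder⟩ := exists_norm_subgrad_sub_le
  refine ⟨δ₀, hδ₀, fun ε C K hε hC hK => ?_⟩
  obtain ⟨R, hR, hKR⟩ := hK.isBounded.exists_pos_norm_lt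
  obtain ⟨Y, hY, hbound⟩ := exists_norm_subgrad_le hε hC hR
  obtain ⟨M, _, hMbound⟩ := hholder ε C R Y hε hC hR hY
  refine ⟨max (max Y (Y * R)) M, by positivity, fun u v Ω p q h hp hu hq hv => ?_⟩
  have hYu (x y : R2) (hx : ‖x‖ ≤ R) (hy : SubgradAt u x y) : ‖y‖ ≤ Y :=
    hbound u v Ω p h hp hu x y hx hy
  exact holderC1On_of_subgrad h.convexOn_left h.nonneg_left h.map_zero_left hδ₀ hKR hYu
    (fun x x' y y' hx hx' hy hy' => hMbound u v Ω q h hq hv x x' y y' hx hx' (hYu x y hx hy)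
      (hYu x' y' hx' hy') hy hy') (le_max_of_le_left (le_max_left _ _))
    (le_max_of_le_left (le_max_right _ _)) (le_max_right _ _)

theorem stmt_6_general : ∃ δ₀ : ℝ, 0 < δ₀ ∧ ∀ δ : ℝ, 0 < δ → ∀ K : Set R2, IsCompact K →
    ∃ C : ℝ, 0 < C ∧ ∀ (u v : R2 → ℝ) (Ω₁ Ω₂ : Set R2), IsPotentialPair u v Ω₁ Ω₂ →
      HasUnitSection δ u → HasUnitSection δ v → HolderC1On K δ₀ C u ∧ HolderC1On K δ₀ C v := by
  obtain ⟨δ₀, hδ₀, hreg⟩ := exists_holderC1On_of_isDualPair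
  refine ⟨δ₀, hδ₀, fun δ hδ K hK => ?_⟩
  obtain ⟨ε, C, hε, hC, hgrow⟩ := exists_hasLinearGrowth_of_hasUnitSection hδ
  obtain ⟨M, hM, hMreg⟩ := hreg ε C K hε hC hK
  refine ⟨M, hM, fun u v Ω₁ Ω₂ h hu hv => ?_⟩
  obtain ⟨p, hp, hpu⟩ := hgrow u h.left.convexOn h.left.nonneg h.left.map_zero hu
  obtain ⟨q, hq, hqv⟩ := hgrow v h.right.convexOn h.right.nonneg h.right.map_zero hv
  exact ⟨hMreg u v Ω₂ p q h.isDualPair hp hpu hq hqv,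
    hMreg v u Ω₁ q p h.isDualPair_swap hq hqv hp hpu⟩

/-! ### The family `S(δ̄)` -/

lemma ellipse_one_one {e f : R2} (he : ‖e‖ = 1) (hf : ‖f‖ = 1) (hef : ⟪e, f⟫ = 0) :
    ellipse e f 1 1 = closedBall 0 1 := by
  have hon : Orthonormal ℝ ![e, f] := by
    simp [orthonormal_vecCons_iff, he, hf, hef]
  have hspan : ⊤ ≤ Submodule.span ℝ (range ![e, f]) :=
    (hon.linearIndependent.span_eq_top_of_card_eq_finrank (by simp)).ge
  have hsum (x : R2) : ⟪x, e⟫ ^ 2 + ⟪x, f⟫ ^ 2 = ‖x‖ ^ 2 := by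
    simpa using (OrthonormalBasis.mk hon hspan).sum_sq_norm_inner_left x
  ext x
  simp only [ellipse, mem_ofPred_eq, div_one, mem_closedBall_zero_iff, hsum,
    sq_le_one_iff₀ (norm_nonneg x)]

open scoped Pointwise in
lemma HasUnitSection.of_ellipse {w : R2 → ℝ} {e f z : R2} {S : Set R2} {δ : ℝ} (hδ : 0 < δ)
    (he : ‖e‖ = 1) (hf : ‖f‖ = 1) (hef : ⟪e, f⟫ = 0) (hS : IsCentredSection w 0 1 S)
    (hin : (fun x => z + δ • x) '' ellipse e f 1 1 ⊆ S)
    (hout : S ⊆ (fun x => δ⁻¹ • x) '' ellipse e f 1 1) : HasUnitSection δ w := by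
  rw [ellipse_one_one he hf hef] at hin hout
  refine ⟨S, z, hS, ?_, ?_⟩
  · rwa [← affinity_unitClosedBall hδ.le, ← image_smul, ← image_vadd, image_image]
  · rwa [image_smul, smul_unitClosedBall, Real.norm_of_nonneg (inv_nonneg.2 hδ.le)] at hout

namespace InSFamily

variable {δ : ℝ} {u v : R2 → ℝ} {Ω₁ Ω₂ : Set R2} {L l : ℝ → ℝ} {e f : ℝ → R2}

lemma isPotentialPair (h : InSFamily δ u v Ω₁ Ω₂ L l e f) : IsPotentialPair u v Ω₁ Ω₂ := by
  obtain ⟨hu, hv, hΩ₁, hΩ₂, hi₁, hi₂, -, -, hgu, hgv, hAu, hu0, hsu, hAv, hv0, hsv, hleg, -⟩ := h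
  exact ⟨⟨hu, hΩ₁, hi₂, hgu, hAu, hu0, hsu⟩, ⟨hv, hΩ₂, hi₁, hgv, hAv, hv0, hsv⟩, hleg⟩

lemma hasUnitSection (h : InSFamily δ u v Ω₁ Ω₂ L l e f) (hδ : 0 < δ) :
    HasUnitSection δ u ∧ HasUnitSection δ v := by
  obtain ⟨-, -, -, -, -, -, -, -, -, -, -, -, -, -, -, -, -, hL, hl, hh⟩ := h
  obtain ⟨he, hf, hef, -, -, -, ⟨S, hS, ⟨x, hx⟩, hSe⟩, ⟨T, hT, ⟨y, hy⟩, hTe⟩⟩ :=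
    hh 1 ⟨one_pos, le_rfl⟩
  rw [hL, hl] at hx hSe hy hTe
  exact ⟨.of_ellipse hδ he hf hef hS (hx.trans inter_subset_right) hSe,
    .of_ellipse hδ hf he (by rw [real_inner_comm, hef]) hT (hy.trans inter_subset_right) hTe⟩

end InSFamily

/-- locally uniform `C^{1,δ₀}` estimate for the family `S(δ̄)`: there is an
absolute `δ₀ > 0` such that for every `δ̄ > 0` and compact `K ⊆ ℝ²` there is `C` (depending
only on `K` and `δ̄`) bounding, for every `(u, v) ∈ S(δ̄)`, the sup of `|u|`, `|∇u|` on `K`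
and the `δ₀`-Hölder seminorm of `∇u` on `K`, with `u` continuously differentiable on `K`;
and the same with `u` replaced by `v`. -/
theorem stmt_6 :
    ∃ δ₀ : ℝ, 0 < δ₀ ∧
      ∀ δb : ℝ, 0 < δb → ∀ K : Set R2, IsCompact K →
        ∃ C : ℝ, 0 < C ∧
          ∀ (u v : R2 → ℝ) (Ω₁ Ω₂ : Set R2) (L l : ℝ → ℝ) (e f : ℝ → R2),
            InSFamily δb u v Ω₁ Ω₂ L l e f →
            ((∀ x ∈ K, DifferentiableAt ℝ u x) ∧
              ContinuousOn (fun x => gradient u x) K ∧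
              (∀ x ∈ K, |u x| ≤ C) ∧ (∀ x ∈ K, ‖gradient u x‖ ≤ C) ∧
              (∀ x ∈ K, ∀ y ∈ K,
                ‖gradient u x - gradient u y‖ ≤ C * ‖x - y‖ ^ δ₀)) ∧
            ((∀ x ∈ K, DifferentiableAt ℝ v x) ∧
              ContinuousOn (fun x => gradient v x) K ∧
              (∀ x ∈ K, |v x| ≤ C) ∧ (∀ x ∈ K, ‖gradient v x‖ ≤ C) ∧
              (∀ x ∈ K, ∀ y ∈ K,
                ‖gradient v x - gradient v y‖ ≤ C * ‖x - y‖ ^ δ₀)) := by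
  obtain ⟨δ₀, hδ₀, H⟩ := stmt_6_general
  refine ⟨δ₀, hδ₀, fun δb hδb K hK => (H δb hδb K hK).imp fun C ⟨hC, hreg⟩ => ⟨hC, ?_⟩⟩
  exact fun u v Ω₁ Ω₂ L l e f h => hreg u v Ω₁ Ω₂ h.isPotentialPair
    (h.hasUnitSection hδb).1 (h.hasUnitSection hδb).2
end
end

section
/- Let δ̄ > 0 and let (u, v) ∈ S(δ̄) with associated convex domains Ω₁ and Ω₂, and assume v is strictly convex on the closure of Ω₂. Let z₀ ∈ ℝ² be a point not in the closure of Ω₂ and let ℓ be an affine function with ℓ ≤ v on ℝ² and ℓ(z₀) = v(z₀) (a supporting affine function of v at z₀). Then there exists a point y₀ ∈ ∂Ω₂ such that v = ℓ on the entire infinite ray {y₀ + t(z₀ − y₀) : t ≥ 0}; in particular the contact set {v = ℓ} is a cone with vertex y₀ and ℓ is also a supporting affine function of v at y₀. -/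
noncomputable section

open MeasureTheory Metric Set
open scoped RealInnerProductSpace

/-! Tilting a supporting affine function `ℓ` of `v` slightly shows that a bounded cap cut off the
contact set `{v = ℓ}` by a half-space must meet the support of the Monge–Ampère measure of `v`:
otherwise a whole ball of slopes would be attained off that support. Strict convexity leaves only
one contact point `y₀` in `closure Ω`, so `y₀` maximises over the contact set every linear
functional whose caps are bounded. If the contact set were not a cone with vertex `y₀`, a functional
separating it from a point of one of its rays, tilted by a functional that is proper on the contact
set, would violate this maximality. -/

/-- The subdifferential of `v` at `x`, with slopes taken in the dual space; `SubgradAt` is the case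
of the Euclidean plane, where slopes are identified with vectors. -/
def subdifferential {E : Type*} [AddCommGroup E] [Module ℝ E] [TopologicalSpace E] (v : E → ℝ)
    (x : E) : Set (StrongDual ℝ E) :=
  {p | ∀ y, v x + p (y - x) ≤ v y}

/-- The set `{v = ℓ}` where `v` touches the affine function `ℓ`; it is of interest when `ℓ ≤ v`. -/
def contactSet {E : Type*} [AddCommGroup E] [Module ℝ E] (v : E → ℝ) (ℓ : E →ᵃ[ℝ] ℝ) : Set E :=
  {x | v x = ℓ x}

theorem eq_of_mem_of_subsingleton_inter_nhds {E : Type*} [AddCommGroup E] [Module ℝ E]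
    [TopologicalSpace E] [IsTopologicalAddGroup E] [ContinuousSMul ℝ E] {K U : Set E}
    (hK : Convex ℝ K) {y z : E} (hy : y ∈ K) (hU : U ∈ nhds y) (hsub : (K ∩ U).Subsingleton)
    (hz : z ∈ K) : z = y := by
  have hlim : Filter.Tendsto (AffineMap.lineMap y z : ℝ → E) (nhdsWithin 0 (Ioi 0)) (nhds y) := by
    have hcont : Continuous (AffineMap.lineMap y z : ℝ → E) := AffineMap.lineMap_continuous
    simpa using (hcont.tendsto 0).mono_left nhdsWithin_le_nhds
  obtain ⟨t, htU, ht₀, ht₁⟩ :=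
    ((hlim.eventually hU).and (Ioo_mem_nhdsGT (zero_lt_one' ℝ))).exists
  have htK : AffineMap.lineMap y z t ∈ K := hK.lineMap_mem hy hz ⟨ht₀.le, ht₁.le⟩
  have hty : AffineMap.lineMap y z t = y := hsub ⟨htK, htU⟩ ⟨hy, mem_of_mem_nhds hU⟩
  exact (AffineMap.lineMap_eq_left_iff.mp hty).resolve_right ht₀.ne' |>.symm

section Convexity

variable {E : Type*} [NormedAddCommGroup E] [NormedSpace ℝ E]

theorem add_smul_sub_mem_of_forall_le_of_isBounded_cap {K : Set E} (hK : Convex ℝ K)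
    (hKcl : IsClosed K) {m : StrongDual ℝ E} (hm : ∀ k, Bornology.IsBounded {x ∈ K | m x ≤ k})
    {y : E} (hy : y ∈ K)
    (hmax : ∀ ψ : StrongDual ℝ E, (∀ c, Bornology.IsBounded {x ∈ K | c ≤ ψ x}) →
      ∀ x ∈ K, ψ x ≤ ψ y)
    {x : E} (hx : x ∈ K) {t : ℝ} (ht : 0 ≤ t) : y + t • (x - y) ∈ K := by
  by_contra hnot
  obtain ⟨φ, s, hφK, hφs⟩ := geometric_hahn_banach_closed_point hK hKcl hnot
  have hφ : 0 < φ x - φ y := by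
    simp only [map_add, map_smul, map_sub, smul_eq_mul] at hφs
    exact pos_of_mul_pos_right (by linarith [hφK y hy]) ht
  obtain ⟨ε, hε, hεm⟩ := exists_pos_mul_lt hφ (m x - m y)
  have hψ := hmax (φ - ε • m) (fun c => (hm ((s - c) / ε)).subset ?_) x hx
  · simp only [sub_apply, smul_apply, smul_eq_mul] at hψ
    linarith
  · rintro z ⟨hz, hcz⟩
    simp only [sub_apply, smul_apply, smul_eq_mul] at hcz
    exact ⟨hz, (le_div_iff₀ hε).mpr (by linarith [hφK z hz])⟩

theorem isBounded_sublevel_of_lt_sphere [FiniteDimensional ℝ E] {w : E → ℝ}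
    (hw : ConvexOn ℝ univ w) {x₀ : E} {r : ℝ} (hr : 0 < r)
    (hlt : ∀ x ∈ sphere x₀ r, w x₀ < w x) (k : ℝ) : Bornology.IsBounded {x | w x ≤ k} := by
  have := FiniteDimensional.proper_real E
  have hwc : Continuous w := continuousOn_univ.mp (hw.continuousOn isOpen_univ)
  obtain ⟨M, hM, hMw⟩ := (isCompact_sphere x₀ r).exists_forall_le' hwc.continuousOn hlt
  refine isBounded_closedBall (x := x₀) (r := max r (r * (k - w x₀) / (M - w x₀)))
    |>.subset fun x hx => ?_
  rw [mem_closedBall, le_max_iff, or_iff_not_imp_left, not_le]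
  intro hrx
  have hd : 0 < dist x x₀ := hr.trans hrx
  set τ := r / dist x x₀
  have hτ : 0 < τ := by positivity
  have hsphere : AffineMap.lineMap x₀ x τ ∈ sphere x₀ r := by
    rw [mem_sphere, dist_lineMap_left, Real.norm_of_nonneg hτ.le, dist_comm x₀ x]
    exact div_mul_cancel₀ r hd.ne'
  have hconv : w (AffineMap.lineMap x₀ x τ) ≤ (1 - τ) * w x₀ + τ * w x := by
    rw [AffineMap.lineMap_apply_module]
    exact hw.2 (mem_univ _) (mem_univ _) (sub_nonneg.mpr ((div_le_one hd).mpr hrx.le)) hτ.le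
      (sub_add_cancel 1 τ)
  have hle : M - w x₀ ≤ τ * (k - w x₀) := by
    have : τ * w x ≤ τ * k := mul_le_mul_of_nonneg_left hx hτ.le
    linarith [hMw _ hsphere]
  rw [le_div_iff₀ (sub_pos.mpr hM)]
  calc dist x x₀ * (M - w x₀) ≤ dist x x₀ * (τ * (k - w x₀)) := by gcongr
    _ = r * (k - w x₀) := by rw [← mul_assoc, mul_div_cancel₀ r hd.ne']

end Convexity

theorem exists_pos_forall_mul_lt {X : Type*} [TopologicalSpace X] {K : Set X} (hK : IsCompact K)
    {g w : X → ℝ} (hg : ContinuousOn g K) (hw : ContinuousOn w K) (hw₀ : ∀ x ∈ K, 0 ≤ w x)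
    (hgw : ∀ x ∈ K, w x = 0 → g x < 0) : ∃ ε > 0, ∀ x ∈ K, ε * g x < w x := by
  obtain ⟨M, hM, hMK⟩ : ∃ M > 0, ∀ x ∈ K, M ≤ max (w x) (-g x) := by
    refine hK.exists_forall_le' (hw.sup hg.neg) fun x hx => lt_max_iff.mpr ?_
    exact (hw₀ x hx).lt_or_eq.imp_right fun h => neg_pos.mpr (hgw x hx h.symm)
  obtain ⟨G, hG⟩ := hK.bddAbove_image hg
  obtain ⟨ε, hε, hGε⟩ := exists_pos_mul_lt hM G
  refine ⟨ε, hε, fun x hx => ?_⟩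
  rcases le_max_iff.mp (hMK x hx) with hMw | hMg
  · calc ε * g x ≤ ε * G := by gcongr; exact hG (mem_image_of_mem g hx)
      _ < M := by rwa [mul_comm]
      _ ≤ w x := hMw
  · exact (mul_neg_of_pos_of_neg hε (by linarith)).trans_le (hw₀ x hx)

section Subdifferential

variable {E : Type*} [AddCommGroup E] [Module ℝ E] [TopologicalSpace E]

theorem mem_subdifferential_iff_isMinOn {v : E → ℝ} {x : E} {p : StrongDual ℝ E} :
    p ∈ subdifferential v x ↔ IsMinOn (fun y => v y - p y) univ x := by
  refine isMinOn_univ_iff.trans (forall_congr' fun y => ?_) |>.symm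
  rw [map_sub]
  constructor <;> intro h <;> linarith

theorem convexOn_sub_strongDual {v : E → ℝ} (hv : ConvexOn ℝ univ v) (p : StrongDual ℝ E) :
    ConvexOn ℝ univ (fun x => v x - p x) :=
  hv.sub (p.toLinearMap.concaveOn convex_univ)

theorem subdifferential_nonempty [IsTopologicalAddGroup E] [ContinuousSMul ℝ E] {v : E → ℝ}
    (hv : ConvexOn ℝ univ v) (hvc : Continuous v) (x : E) : (subdifferential v x).Nonempty := by
  have hconv : Convex ℝ {z : E × ℝ | v z.1 < z.2} := by
    simpa using hv.convex_strict_epigraph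
  have hopen : IsOpen {z : E × ℝ | v z.1 < z.2} :=
    isOpen_lt (hvc.comp continuous_fst) continuous_snd
  obtain ⟨F, hF⟩ := geometric_hahn_banach_open_point hconv hopen (x := (x, v x)) (lt_irrefl (v x))
  set g : StrongDual ℝ E := F.comp (ContinuousLinearMap.inl ℝ E ℝ)
  set α : ℝ := F (0, 1)
  have hFg (y : E) (t : ℝ) : F (y, t) = g y + t * α := by
    rw [← smul_eq_mul, ← map_smul, ContinuousLinearMap.comp_apply, ← map_add]
    simp
  have hα : 0 < -α := by
    have := hF (x, v x + 1) (lt_add_one (v x))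
    rw [hFg, hFg] at this
    linarith
  refine ⟨(-α)⁻¹ • g, fun y => le_of_forall_gt fun t ht => ?_⟩
  have hlt := hF (y, t) ht
  rw [hFg, hFg] at hlt
  rw [smul_apply, smul_eq_mul, ← lt_sub_iff_add_lt', inv_mul_lt_iff₀ hα, map_sub]
  linarith

end Subdifferential

section FiniteDimensional

variable {E : Type*} [NormedAddCommGroup E] [NormedSpace ℝ E] [FiniteDimensional ℝ E] {v : E → ℝ}

theorem exists_mem_subdifferential_of_lt_frontier (hv : ConvexOn ℝ univ v) {U : Set E}
    (hU : IsOpen U) (hUb : Bornology.IsBounded U) {x₁ : E} (hx₁ : x₁ ∈ U) {p : StrongDual ℝ E}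
    (hlt : ∀ x ∈ frontier U, v x₁ - p x₁ < v x - p x) : ∃ x ∈ U, p ∈ subdifferential v x := by
  have := FiniteDimensional.proper_real E
  have hvc : Continuous v := continuousOn_univ.mp (hv.continuousOn isOpen_univ)
  obtain ⟨x, hxU, hmin⟩ := hUb.isCompact_closure.exists_isLocalMin_mem_open subset_closure
    (f := fun x => v x - p x) (by fun_prop) (subset_closure hx₁)
    (by rwa [← hU.frontier_eq]) hU
  exact ⟨x, hxU, mem_subdifferential_iff_isMinOn.mpr <| isMinOn_univ_iff.mpr <|
    IsMinOn.of_isLocalMin_of_convex_univ hmin (convexOn_sub_strongDual hv p)⟩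

theorem mem_interior_iUnion_subdifferential_of_lt_frontier (hv : ConvexOn ℝ univ v) {U : Set E}
    (hU : IsOpen U) (hUb : Bornology.IsBounded U) {x₁ : E} (hx₁ : x₁ ∈ U) {p : StrongDual ℝ E}
    (hlt : ∀ x ∈ frontier U, v x₁ - p x₁ < v x - p x) :
    p ∈ interior (⋃ x ∈ U, subdifferential v x) := by
  have := FiniteDimensional.proper_real E
  have hvc : Continuous v := continuousOn_univ.mp (hv.continuousOn isOpen_univ)
  have hfr : IsCompact (frontier U) :=
    isCompact_of_isClosed_isBounded isClosed_frontier (hUb.closure.subset frontier_subset_closure)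
  have hev : ∀ᶠ q : StrongDual ℝ E in nhds p, ∀ x ∈ frontier U, v x₁ - q x₁ < v x - q x := by
    refine hfr.eventually_forall_of_forall_eventually fun x hx => ?_
    exact (isOpen_lt (f := fun z : StrongDual ℝ E × E => v x₁ - z.1 x₁)
      (g := fun z => v z.2 - z.1 z.2) (by fun_prop) (by fun_prop)).mem_nhds (hlt x hx)
  rw [mem_interior_iff_mem_nhds]
  filter_upwards [hev] with q hq
  exact mem_iUnion₂.mpr <| by
    simpa using exists_mem_subdifferential_of_lt_frontier hv hU hUb hx₁ hq

theorem exists_slope_isBounded_sublevel (hv : ConvexOn ℝ univ v) {Ω : Set E}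
    (hΩ : (interior Ω).Nonempty) (hsc : StrictConvexOn ℝ Ω v) :
    ∃ p : StrongDual ℝ E, ∀ k, Bornology.IsBounded {x | v x - p x ≤ k} := by
  obtain ⟨x₀, hx₀⟩ := hΩ
  obtain ⟨r, hr, hrΩ⟩ := nhds_basis_closedBall.mem_iff.mp (mem_interior_iff_mem_nhds.mp hx₀)
  obtain ⟨p, hp⟩ := subdifferential_nonempty hv
    (continuousOn_univ.mp (hv.continuousOn isOpen_univ)) x₀
  have hmin := mem_subdifferential_iff_isMinOn.mp hp
  refine ⟨p, isBounded_sublevel_of_lt_sphere (convexOn_sub_strongDual hv p) (x₀ := x₀) hr ?_⟩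
  intro x hx
  have hxΩ : x ∈ Ω := hrΩ (sphere_subset_closedBall hx)
  refine (hmin (mem_univ x)).lt_of_ne fun heq => ne_of_mem_sphere hx hr.ne' ?_
  have hscp : StrictConvexOn ℝ Ω (fun x => v x - p x) :=
    hsc.sub_concaveOn (p.toLinearMap.concaveOn hsc.1)
  refine hscp.eq_of_isMinOn ?_ (hmin.on_subset (subset_univ Ω)) hxΩ (interior_subset hx₀)
  exact fun y _ => heq.symm.trans_le (hmin (mem_univ y))

end FiniteDimensional

section ContactSet

variable {E : Type*} [AddCommGroup E] [Module ℝ E] {v : E → ℝ} {ℓ : E →ᵃ[ℝ] ℝ}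

theorem concaveOn_affineMap (ℓ : E →ᵃ[ℝ] ℝ) {s : Set E} (hs : Convex ℝ s) : ConcaveOn ℝ s ℓ :=
  ((concaveOn_id convex_univ).comp_affineMap ℓ).subset (subset_univ s) hs

theorem convex_contactSet (hv : ConvexOn ℝ univ v) (hℓv : ∀ x, ℓ x ≤ v x) :
    Convex ℝ (contactSet v ℓ) := by
  have := (hv.sub (concaveOn_affineMap ℓ convex_univ)).convex_le 0
  convert this using 1
  ext x
  simp [contactSet, le_antisymm_iff, hℓv x]

theorem subsingleton_contactSet_inter {s : Set E} (hsc : StrictConvexOn ℝ s v)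
    (hℓv : ∀ x, ℓ x ≤ v x) : (contactSet v ℓ ∩ s).Subsingleton := by
  rintro x ⟨hx, hxs⟩ y ⟨hy, hys⟩
  have hmin {z : E} (hz : z ∈ contactSet v ℓ) : IsMinOn (fun x => v x - ℓ x) s z := fun x _ => by
    simpa [sub_eq_zero.mpr hz] using hℓv x
  exact (hsc.sub_concaveOn (concaveOn_affineMap ℓ hsc.1)).eq_of_isMinOn (hmin hx) (hmin hy) hxs hys

end ContactSet

section ContactCaps

variable {E : Type*} [NormedAddCommGroup E] [NormedSpace ℝ E] [FiniteDimensional ℝ E]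
  {v : E → ℝ} {ℓ : E →ᵃ[ℝ] ℝ}

theorem isClosed_contactSet (hv : ConvexOn ℝ univ v) : IsClosed (contactSet v ℓ) :=
  isClosed_eq (continuousOn_univ.mp (hv.continuousOn isOpen_univ)) ℓ.continuous_of_finiteDimensional

theorem exists_strongDual_isBounded_contactSet {p : StrongDual ℝ E}
    (hp : ∀ k, Bornology.IsBounded {x | v x - p x ≤ k}) (ℓ : E →ᵃ[ℝ] ℝ) :
    ∃ m : StrongDual ℝ E, ∀ k, Bornology.IsBounded {x ∈ contactSet v ℓ | m x ≤ k} := by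
  refine ⟨ℓ.linear.toContinuousLinearMap - p, fun k => (hp (k + ℓ 0)).subset ?_⟩
  rintro x ⟨hx, hxk⟩
  have hℓ : ℓ x = ℓ.linear x + ℓ 0 := congrFun ℓ.decomp x
  simp only [sub_apply, LinearMap.coe_toContinuousLinearMap'] at hxk
  rw [mem_ofPred_eq, show v x = ℓ x from hx]
  linarith

variable {Ω : Set E} (hv : ConvexOn ℝ univ v)
  (hMA : interior (⋃ x ∈ (closure Ω)ᶜ, subdifferential v x) = ∅) (hℓv : ∀ x, ℓ x ≤ v x)
include hv hMA hℓv

theorem exists_mem_closure_of_isBounded_cap {ψ : StrongDual ℝ E} {c : ℝ}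
    (hcap : Bornology.IsBounded {x ∈ contactSet v ℓ | c ≤ ψ x}) {x₁ : E}
    (hx₁ : x₁ ∈ contactSet v ℓ) (hc : c < ψ x₁) :
    ∃ x ∈ contactSet v ℓ ∩ closure Ω, c ≤ ψ x := by
  by_contra! hno
  have := FiniteDimensional.proper_real E
  have hvc : Continuous v := continuousOn_univ.mp (hv.continuousOn isOpen_univ)
  have hℓc : Continuous ℓ := ℓ.continuous_of_finiteDimensional
  obtain ⟨R, hR⟩ := hcap.subset_ball 0
  set U := ball (0 : E) R ∩ (closure Ω)ᶜ
  have hU : IsOpen U := isOpen_ball.inter isClosed_closure.isOpen_compl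
  have hUb : Bornology.IsBounded U := isBounded_ball.subset inter_subset_left
  have hcapU {x : E} (hx : x ∈ contactSet v ℓ) (hcx : c ≤ ψ x) : x ∈ U :=
    ⟨hR ⟨hx, hcx⟩, fun hxΩ => (hno x ⟨hx, hxΩ⟩).not_ge hcx⟩
  have hfr : IsCompact (frontier U) :=
    isCompact_of_isClosed_isBounded isClosed_frontier (hUb.closure.subset frontier_subset_closure)
  obtain ⟨ε, -, hεU⟩ : ∃ ε > 0, ∀ x ∈ frontier U, ε * (ψ x - ψ x₁) < v x - ℓ x := by
    refine exists_pos_forall_mul_lt hfr (by fun_prop) (by fun_prop)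
      (fun x _ => sub_nonneg.mpr (hℓv x)) fun x hx hvx => ?_
    by_contra! hle
    have hxU : x ∈ U := hcapU (sub_eq_zero.mp hvx) (by linarith)
    exact hU.inter_frontier_eq.subset ⟨hxU, hx⟩
  have hmem := mem_interior_iUnion_subdifferential_of_lt_frontier hv hU hUb (hcapU hx₁ hc.le)
    (p := ℓ.linear.toContinuousLinearMap + ε • ψ) fun x hx => ?_
  · have hsub := interior_mono (biUnion_subset_biUnion_left inter_subset_right) hmem
    exact hMA.subset hsub
  · have hℓ (y : E) : ℓ y = ℓ.linear y + ℓ 0 := congrFun ℓ.decomp y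
    simp only [add_apply, smul_apply, smul_eq_mul, LinearMap.coe_toContinuousLinearMap']
    linarith [hεU x hx, hℓ x, hℓ x₁, show v x₁ = ℓ x₁ from hx₁]

theorem nonempty_contactSet_inter_closure {m : StrongDual ℝ E}
    (hm : ∀ k, Bornology.IsBounded {x ∈ contactSet v ℓ | m x ≤ k})
    (hne : (contactSet v ℓ).Nonempty) : (contactSet v ℓ ∩ closure Ω).Nonempty := by
  obtain ⟨z, hz⟩ := hne
  obtain ⟨y, hy, -⟩ := exists_mem_closure_of_isBounded_cap hv hMA hℓv (ψ := -m) (c := -(m z + 1))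
    ((hm (m z + 1)).subset fun x hx => ⟨hx.1, neg_le_neg_iff.mp hx.2⟩) hz
    (neg_lt_neg (lt_add_one (m z)))
  exact ⟨y, hy⟩

theorem le_of_subsingleton_contactSet_inter_closure {y : E}
    (hsub : (contactSet v ℓ ∩ closure Ω).Subsingleton) (hy : y ∈ contactSet v ℓ ∩ closure Ω)
    {ψ : StrongDual ℝ E} (hψ : ∀ c, Bornology.IsBounded {x ∈ contactSet v ℓ | c ≤ ψ x}) {x : E}
    (hx : x ∈ contactSet v ℓ) : ψ x ≤ ψ y := by
  refine le_of_forall_lt_imp_le_of_dense fun c hc => ?_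
  obtain ⟨y', hy', hcy'⟩ := exists_mem_closure_of_isBounded_cap hv hMA hℓv (hψ c) hx hc
  rwa [hsub hy hy']

end ContactCaps

theorem AlexandrovSol.interior_subdifferential_compl_closure_eq_empty {w : R2 → ℝ} {Ω : Set R2}
    (hA : AlexandrovSol w Ω) :
    interior (⋃ x ∈ (closure Ω)ᶜ, subdifferential w x) = ∅ := by
  have hvol : volume (⋃ x ∈ (closure Ω)ᶜ, {p : R2 | SubgradAt w x p}) = 0 := by
    rw [hA _ isClosed_closure.measurableSet.compl, (disjoint_compl_left.mono_right
      subset_closure).inter_eq, measure_empty]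
  have hpre : InnerProductSpace.toDual ℝ R2 ⁻¹' (⋃ x ∈ (closure Ω)ᶜ, subdifferential w x) =
      ⋃ x ∈ (closure Ω)ᶜ, {p : R2 | SubgradAt w x p} := by
    simp only [preimage_iUnion]
    rfl
  have hint := (InnerProductSpace.toDual ℝ R2).toHomeomorph.preimage_interior
    (⋃ x ∈ (closure Ω)ᶜ, subdifferential w x)
  rw [LinearIsometryEquiv.coe_toHomeomorph, hpre, Measure.interior_eq_empty_of_null hvol] at hint
  exact (InnerProductSpace.toDual ℝ R2).surjective.preimage_injective
    (hint.trans preimage_empty.symm)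

/-- `hMA` is a weak, measure-free form of the Monge–Ampère measure of `v` being carried by
`closure Ω`: the slopes attained elsewhere contain no ball. -/
theorem stmt_8_general {E : Type*} [NormedAddCommGroup E] [NormedSpace ℝ E]
    [FiniteDimensional ℝ E] {v : E → ℝ} {Ω : Set E} (hv : ConvexOn ℝ univ v)
    (hΩ : (interior Ω).Nonempty) (hsc : StrictConvexOn ℝ (closure Ω) v)
    (hMA : interior (⋃ x ∈ (closure Ω)ᶜ, subdifferential v x) = ∅)
    {z₀ : E} (hz₀ : z₀ ∉ interior Ω)
    {ℓ : E →ᵃ[ℝ] ℝ} (hsupp : ∀ x, ℓ x ≤ v x) (htouch : ℓ z₀ = v z₀) :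
    ∃ y₀ ∈ frontier Ω,
      (∀ t : ℝ, 0 ≤ t → v (y₀ + t • (z₀ - y₀)) = ℓ (y₀ + t • (z₀ - y₀))) ∧
      (∀ x : E, v x = ℓ x → ∀ t : ℝ, 0 ≤ t →
        v (y₀ + t • (x - y₀)) = ℓ (y₀ + t • (x - y₀))) ∧
      ℓ y₀ = v y₀ := by
  have hz₀K : z₀ ∈ contactSet v ℓ := htouch.symm
  have hconv : Convex ℝ (contactSet v ℓ) := convex_contactSet hv hsupp
  have hsub : (contactSet v ℓ ∩ closure Ω).Subsingleton := subsingleton_contactSet_inter hsc hsupp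
  obtain ⟨p, hp⟩ := exists_slope_isBounded_sublevel hv
    (hΩ.mono (interior_mono subset_closure)) hsc
  obtain ⟨m, hm⟩ := exists_strongDual_isBounded_contactSet hp ℓ
  obtain ⟨y₀, hy₀⟩ := nonempty_contactSet_inter_closure hv hMA hsupp hm ⟨z₀, hz₀K⟩
  have hcone : ∀ x ∈ contactSet v ℓ, ∀ t : ℝ, 0 ≤ t → y₀ + t • (x - y₀) ∈ contactSet v ℓ :=
    fun x hx t ht => add_smul_sub_mem_of_forall_le_of_isBounded_cap hconv
      (isClosed_contactSet hv) hm hy₀.1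
      (fun ψ hψ x hx => le_of_subsingleton_contactSet_inter_closure hv hMA hsupp hsub hy₀ hψ hx)
      hx ht
  refine ⟨y₀, ⟨hy₀.2, fun hint => hz₀ ?_⟩, hcone z₀ hz₀K, hcone, hy₀.1.symm⟩
  have hz₀y₀ : z₀ = y₀ := eq_of_mem_of_subsingleton_inter_nhds hconv hy₀.1
    (mem_interior_iff_mem_nhds.mp (interior_mono subset_closure hint)) hsub hz₀K
  rwa [hz₀y₀]

/-- for `(u, v) ∈ S(δ̄)` with `v` strictly convex on `closure Ω₂`, any
supporting affine function `ℓ` of `v` at a point `z₀ ∉ closure Ω₂` coincides with `v` on an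
infinite ray starting at some `y₀ ∈ ∂Ω₂` in the direction of `z₀`; the contact set
`{v = ℓ}` is a cone with vertex `y₀`, and `ℓ` also supports `v` at `y₀`. -/
theorem stmt_8 (δb : ℝ) (hδb : 0 < δb)
    (u v : R2 → ℝ) (Ω₁ Ω₂ : Set R2) (L l : ℝ → ℝ) (e f : ℝ → R2)
    (hmem : InSFamily δb u v Ω₁ Ω₂ L l e f)
    (hsc : StrictConvexOn ℝ (closure Ω₂) v)
    (z₀ : R2) (hz₀ : z₀ ∉ closure Ω₂)
    (ℓ : R2 →ᵃ[ℝ] ℝ) (hsupp : ∀ x : R2, ℓ x ≤ v x) (htouch : ℓ z₀ = v z₀) :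
    ∃ y₀ ∈ frontier Ω₂,
      (∀ t : ℝ, 0 ≤ t → v (y₀ + t • (z₀ - y₀)) = ℓ (y₀ + t • (z₀ - y₀))) ∧
      (∀ x : R2, v x = ℓ x → ∀ t : ℝ, 0 ≤ t →
        v (y₀ + t • (x - y₀)) = ℓ (y₀ + t • (x - y₀))) ∧
      ℓ y₀ = v y₀ := by
  obtain ⟨-, hv, -, -, -, hΩ₂, -, -, -, -, -, -, -, hA, -⟩ := hmem
  exact stmt_8_general hv hΩ₂ hsc hA.interior_subdifferential_compl_closure_eq_empty
    (fun h => hz₀ (subset_closure (interior_subset h))) hsupp htouch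
end
end
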